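/- arXiv:math/0310473 — 2 statements merged into one kernel-verified Lean document; each statement's English description precedes it below -/
import Mathlib

section
/- Let K be a finite n-dimensional simplicial complex embedded in Euclidean space, let L be a subdivision of K, let τ^s be an s-simplex of L whose open simplex is contained in the open p-simplex ζ^p of K, and let α^r be an r-simplex of K having ζ^p as a proper face (p+1 ≤ r ≤ n). Then Σ_{i=s+1}^{r} Σ_{η^i} (−1)^{i−s} = (−1)^{r−s}, where the inner sum is over all i-simplices η^i of L whose open simplex is contained in the open simplex α^r and which have τ^s as a proper face. -/
open Filter MeasureTheory Geometry
open scoped BigOperators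

noncomputable section

attribute [local instance 0] Classical.propDecidable

namespace AngleDefectPaper

/-- `N`-dimensional Euclidean space. -/
abbrev Euc (N : ℕ) : Type := EuclideanSpace ℝ (Fin N)

variable {N : ℕ}

/-- The open simplex determined by a finite set of points: the intrinsic
(relative) interior of its convex hull. -/
def openSimplex (s : Finset (Euc N)) : Set (Euc N) :=
  intrinsicInterior ℝ (convexHull ℝ (s : Set (Euc N)))

/-- The normalized solid angle `α(η, σ)` of the simplex `σ` along its face `η`:
the fraction of a small sphere (in the affine span of `σ`) centered at a point of
the open face `η` that lies in `σ`, normalized so that the full sphere has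
measure `1`.  It is computed as the limiting fraction of a small ambient ball
centered at the centroid of `η` that lies in the cylinder obtained by thickening
`σ` in the directions orthogonal to its affine span. -/
def solidAngle (η σ : Finset (Euc N)) : ℝ :=
  limUnder (nhdsWithin (0 : ℝ) (Set.Ioi 0)) fun ε =>
    (volume (Metric.ball (η.centroid ℝ id) ε ∩
      {y : Euc N | ∃ c ∈ convexHull ℝ (σ : Set (Euc N)),
        ∃ w ∈ (vectorSpan ℝ (σ : Set (Euc N)))ᗮ, y = c + w})).toReal /
    (volume (Metric.ball (η.centroid ℝ id) ε)).toReal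

/-- `Tcone r` is (a realization in the plane of) the open cone on `r` points:
`r` half-open segments emanating from the origin in pairwise distinct
directions, glued at the origin.  For `r = 0` it is a single point. -/
def Tcone (r : ℕ) : Set (ℝ × ℝ) :=
  {0} ∪ ⋃ k ∈ Finset.range r,
    {p : ℝ × ℝ | ∃ t : ℝ, 0 ≤ t ∧ t < 1 ∧ p = t • ((1 : ℝ), (k : ℝ))}

/-- `x` has a neighborhood in `S` homeomorphic to `T_r × ℝ^{n-1}`, with the
homeomorphism taking `x` into the apex set `{cone point} × ℝ^{n-1}`. -/
def HasConeNbhd (n r : ℕ) (S : Set (Euc N)) (x : Euc N) : Prop :=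
  ∃ U : Set (Euc N), U ∈ nhdsWithin x S ∧ U ⊆ S ∧
    ∃ h : U ≃ₜ (Tcone r) × EuclideanSpace ℝ (Fin (n - 1)),
      ∀ hx : x ∈ U, ((h ⟨x, hx⟩).1 : ℝ × ℝ) = 0

/-- The set of points of `|K|` having a neighborhood of cone type `r`. -/
def csetAux (n : ℕ) (K : SimplicialComplex ℝ (Euc N)) (r : ℕ) : Set (Euc N) :=
  {x | x ∈ K.space ∧ HasConeNbhd n r K.space x}

/-- The sets `C_r(K)`: for `r ≠ 2` the points with a cone-type-`r` neighborhood,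
and `C_2(K)` is the complement in `|K|` of the union of the others. -/
def cset (n : ℕ) (K : SimplicialComplex ℝ (Euc N)) (r : ℕ) : Set (Euc N) :=
  if r = 2 then K.space \ ⋃ r' ∈ {r' : ℕ | r' ≠ 2}, csetAux n K r'
  else csetAux n K r

/-- The stratification rank `r(η) = r/2`, where `C_r(K)` is the (unique) set of
the stratification containing the open simplex of `η`. -/
def strRank (n : ℕ) (K : SimplicialComplex ℝ (Euc N)) (η : Finset (Euc N)) : ℝ :=
  if h : ∃ r : ℕ, r ≠ 2 ∧ openSimplex η ⊆ csetAux n K r then (h.choose : ℝ) / 2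
  else 1

/-- The set of `n`-simplices of `K` having `η` as a face. -/
def nSimplicesOn (n : ℕ) (K : SimplicialComplex ℝ (Euc N)) (η : Finset (Euc N)) :
    Set (Finset (Euc N)) :=
  {σ | σ ∈ K.faces ∧ σ.card = n + 1 ∧ η ⊆ σ}

/-- The generalized angle defect `D(η) = r(η) - Σ_{σⁿ ≻ η} α(η, σⁿ)`. -/
def defect (n : ℕ) (K : SimplicialComplex ℝ (Euc N)) (η : Finset (Euc N)) : ℝ :=
  strRank n K η - ∑ᶠ σ ∈ nSimplicesOn n K η, solidAngle η σ

/-- The angle defect sequence `a_m = 4 B_{m+2} (2^{m+2} - 1)/(m+2)`, where `B_k`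
is the `k`-th Bernoulli number (with the convention `B_1 = -1/2`). -/
def ads (m : ℕ) : ℚ :=
  4 * bernoulli (m + 2) * (2 ^ (m + 2) - 1) / (m + 2)

/-- The ascending stratified curvature of a simplex `τ` (of dimension
`p = τ.card - 1`) in the `n`-dimensional complex `K`. -/
def asc (n : ℕ) (K : SimplicialComplex ℝ (Euc N)) (τ : Finset (Euc N)) : ℝ :=
  (ads (τ.card - 1) : ℝ) * defect n K τ +
    (ads (τ.card - 1) : ℝ) / 2 *
      ∑ i ∈ Finset.Icc τ.card n,
        (-1 : ℝ) ^ (i - (τ.card - 1)) *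
          ∑ᶠ η ∈ {η : Finset (Euc N) | η ∈ K.faces ∧ η.card = i + 1 ∧ τ ⊆ η},
            defect n K η

/-- The stratified Euler characteristic `χˢ(K) = Σ_{η ∈ K} r(η) (-1)^{dim η}`. -/
def stratEuler (n : ℕ) (K : SimplicialComplex ℝ (Euc N)) : ℝ :=
  ∑ᶠ η ∈ K.faces, strRank n K η * (-1 : ℝ) ^ (η.card - 1)

/-- `fcount F k` is the number of `k`-dimensional simplices in `F`. -/
def fcount (F : Set (Finset (Euc N))) (k : ℕ) : ℕ :=
  {s ∈ F | s.card = k + 1}.ncard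

/-- The combinatorial Euler characteristic `χ(F) = Σ_k (-1)^k f_k(F)`. -/
def eulerChar (F : Set (Finset (Euc N))) : ℤ :=
  ∑ᶠ k : ℕ, (-1 : ℤ) ^ k * fcount F k

/-- The link of `η` in `K`: all simplices `ω` of `K` disjoint from `η` such
that the join `η ∗ ω` is a simplex of `K`. -/
def linkFaces (K : SimplicialComplex ℝ (Euc N)) (η : Finset (Euc N)) :
    Set (Finset (Euc N)) :=
  {ω | ω ∈ K.faces ∧ Disjoint η ω ∧ η ∪ ω ∈ K.faces}

/-- `K` is an `n`-dimensional simplicial complex. -/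
def IsNDim (n : ℕ) (K : SimplicialComplex ℝ (Euc N)) : Prop :=
  (∀ s ∈ K.faces, s.card ≤ n + 1) ∧ ∃ s ∈ K.faces, s.card = n + 1

/-- `L` is a subdivision of `K`: same underlying space, and every open simplex
of `L` is contained in an open simplex of `K`. -/
def IsSubdivision (K L : SimplicialComplex ℝ (Euc N)) : Prop :=
  L.space = K.space ∧ ∀ s ∈ L.faces, ∃ t ∈ K.faces, openSimplex s ⊆ openSimplex t
lemma one_dim_euler {ι : Type} (s : Finset ι) (a : ι → ℤ) (I : ι → Set ℝ) (e : ι → ℤ)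
    (hI : ∀ i ∈ s, (∃ c, I i = {c} ∧ e i = 1) ∨ (∃ p q, p < q ∧ I i = Set.Ioo p q ∧ e i = -1))
    (h : ∀ t, ∑ i ∈ s, a i * (if t ∈ I i then 1 else 0) = 0) :
    ∑ i ∈ s, a i * e i = 0 := by
  have hI' : ∀ i, ∃ p q : ℝ, i ∈ s → ((I i = {p} ∧ e i = 1) ∨
      (p < q ∧ I i = Set.Ioo p q ∧ e i = -1)) := by
    intro i
    by_cases hi : i ∈ s
    · rcases hI i hi with ⟨c, h1⟩ | ⟨p, q, h1⟩
      · exact ⟨c, c, fun _ => Or.inl h1⟩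
      · exact ⟨p, q, fun _ => Or.inr h1⟩
    · exact ⟨0, 0, fun h => absurd h hi⟩
  choose p q hpq using hI'
  set F : Finset ℝ := s.image p ∪ s.image q with hF
  have hε : ∃ ε : ℝ, 0 < ε ∧ ∀ x ∈ F, ∀ y ∈ F, x < y → x + ε < y := by
    have : ∀ᶠ ε in nhdsWithin (0:ℝ) (Set.Ioi 0), ∀ x ∈ F, ∀ y ∈ F, x < y → x + ε < y := by
      rw [Filter.eventually_all_finset]
      intro x _
      rw [Filter.eventually_all_finset]
      intro y _
      by_cases hxy : x < y
      · have : ∀ᶠ ε in nhds (0:ℝ), ε < y - x := gt_mem_nhds (by linarith)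
        filter_upwards [nhdsWithin_le_nhds this] with ε hε _
        linarith
      · exact Filter.Eventually.of_forall fun _ h => absurd h hxy
    obtain ⟨ε, h1, h2⟩ := (this.and self_mem_nhdsWithin).exists
    exact ⟨ε, h2, h1⟩
  obtain ⟨ε, hε0, hε⟩ := hε
  have key : ∀ i ∈ s, ∑ t ∈ F, ((if t ∈ I i then (1:ℤ) else 0) - (if t + ε ∈ I i then 1 else 0))
      = e i := by
    intro i hi
    have hp : p i ∈ F := by simp only [hF, Finset.mem_union, Finset.mem_image]; exact Or.inl ⟨i, hi, rfl⟩
    have hq : q i ∈ F := by simp only [hF, Finset.mem_union, Finset.mem_image]; exact Or.inr ⟨i, hi, rfl⟩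
    rw [Finset.sum_eq_single_of_mem (p i) hp]
    · rcases hpq i hi with ⟨h1, h2⟩ | ⟨h0, h1, h2⟩
      · simp [h1, h2, hε0.ne']
      · have := hε _ hp _ hq h0
        simp [h1, h2, hε0, this]
    · intro t ht hne
      rcases hpq i hi with ⟨h1, h2⟩ | ⟨h0, h1, h2⟩
      · have : t + ε ≠ p i := by
          intro h
          have := hε t ht _ hp (by linarith)
          linarith
        simp [h1, hne, this]
      · rw [h1]
        have : t ∈ Set.Ioo (p i) (q i) ↔ t + ε ∈ Set.Ioo (p i) (q i) := by
          constructor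
          · rintro ⟨h3, h4⟩
            exact ⟨by linarith, hε t ht _ hq h4⟩
          · rintro ⟨h3, h4⟩
            refine ⟨?_, by linarith⟩
            rcases lt_trichotomy t (p i) with h5 | h5 | h5
            · have := hε t ht _ hp h5
              linarith
            · exact absurd h5 hne
            · exact h5
        simp only [this]
        simp
  calc ∑ i ∈ s, a i * e i = ∑ i ∈ s, ∑ t ∈ F, (a i * (if t ∈ I i then (1:ℤ) else 0)
        - a i * (if t + ε ∈ I i then 1 else 0)) := by
        refine Finset.sum_congr rfl fun i hi => ?_
        rw [← key i hi, Finset.mul_sum]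
        simp only [mul_sub]
    _ = ∑ t ∈ F, (∑ i ∈ s, a i * (if t ∈ I i then (1:ℤ) else 0)
        - ∑ i ∈ s, a i * (if t + ε ∈ I i then 1 else 0)) := by
        rw [Finset.sum_comm]
        simp only [Finset.sum_sub_distrib]
    _ = 0 := by simp only [h]; simp

lemma finrank_inf_ker {V : Type*} [AddCommGroup V] [Module ℝ V] [FiniteDimensional ℝ V]
    (D : Submodule ℝ V) (l : V →ₗ[ℝ] ℝ) (h : ¬ D ≤ LinearMap.ker l) :
    Module.finrank ℝ D = Module.finrank ℝ (D ⊓ LinearMap.ker l : Submodule ℝ V) + 1 := by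
  have h0 : l.domRestrict D ≠ 0 := by
    intro h1
    apply h
    intro v hv
    have := LinearMap.congr_fun h1 ⟨v, hv⟩
    simpa using this
  have h1 := Module.Dual.finrank_ker_add_one_of_ne_zero (f := l.domRestrict D) h0
  rw [← h1, ← Submodule.map_comap_subtype, Submodule.finrank_map_subtype_eq]
  rfl

lemma open_interval_of_image {V : Type*} [NormedAddCommGroup V] [NormedSpace ℝ V]
    (A : AffineSubspace ℝ V) (C U : Set V) (hne : C.Nonempty) (hc : Convex ℝ C)
    (hb : Bornology.IsBounded C) (hU : IsOpen U) (hCU : C = (A : Set V) ∩ U)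
    (l : V →L[ℝ] ℝ) (hl : ¬ A.direction ≤ LinearMap.ker (l : V →ₗ[ℝ] ℝ)) :
    ∃ p q, p < q ∧ l '' C = Set.Ioo p q := by
  have hopen : IsOpen (l '' C) := by
    rw [isOpen_iff_mem_nhds]
    rintro _ ⟨x, hx, rfl⟩
    obtain ⟨v, hv, hv0⟩ := SetLike.not_le_iff_exists.1 hl
    have hv1 : l v ≠ 0 := by simpa using hv0
    have hx' : x ∈ (A : Set V) ∩ U := hCU ▸ hx
    have hcont : Continuous fun t : ℝ => ((t - l x) / l v) • v + x := by fun_prop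
    have hmem : ∀ᶠ t in nhds (l x), ((t - l x) / l v) • v + x ∈ U :=
      hcont.continuousAt.eventually (hU.mem_nhds (by simpa using hx'.2))
    filter_upwards [hmem] with t ht
    refine ⟨((t - l x) / l v) • v + x, ?_, ?_⟩
    · rw [hCU]
      exact ⟨AffineSubspace.vadd_mem_of_mem_direction (A.direction.smul_mem _ hv) hx'.1, ht⟩
    · simp [hv1]
  have hne' : (l '' C).Nonempty := hne.image _
  have hconn : IsConnected (l '' C) :=
    ⟨hne', (hc.linear_image (l : V →ₗ[ℝ] ℝ)).isPreconnected⟩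
  have hb' : Bornology.IsBounded (l '' C) := by
    exact (l.lipschitz.isBounded_image hb)
  have hbb := hb'.bddBelow
  have hba := hb'.bddAbove
  have hset : l '' C = Set.Ioo (sInf (l '' C)) (sSup (l '' C)) := by
    apply Set.Subset.antisymm _ (hconn.Ioo_csInf_csSup_subset hbb hba)
    intro t ht
    obtain ⟨a, b, hab, hsub⟩ := (mem_nhds_iff_exists_Ioo_subset.1 (hopen.mem_nhds ht))
    constructor
    · have : (a + t) / 2 ∈ l '' C := hsub ⟨by linarith [hab.1], by linarith [hab.1, hab.2]⟩
      linarith [csInf_le hbb this, hab.1]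
    · have : (b + t) / 2 ∈ l '' C := hsub ⟨by linarith [hab.1, hab.2], by linarith [hab.2]⟩
      linarith [le_csSup hba this, hab.2]
  obtain ⟨t, ht⟩ := hne'
  rw [hset] at ht
  exact ⟨_, _, ht.1.trans ht.2, hset⟩

theorem euler_zero {ι : Type} {V : Type*} [NormedAddCommGroup V] [NormedSpace ℝ V]
    [FiniteDimensional ℝ V] :
    ∀ (n : ℕ) (H : AffineSubspace ℝ V), Module.finrank ℝ H.direction < n →
    ∀ (s : Finset ι) (a : ι → ℤ) (A : ι → AffineSubspace ℝ V) (C : ι → Set V),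
    (∀ i ∈ s, A i ≤ H ∧ (C i).Nonempty ∧ Convex ℝ (C i) ∧ Bornology.IsBounded (C i) ∧
      ∃ U, IsOpen U ∧ C i = (A i : Set V) ∩ U) →
    (∀ x, ∑ i ∈ s, a i * (if x ∈ C i then 1 else 0) = 0) →
    ∑ i ∈ s, a i * (-1) ^ Module.finrank ℝ (A i).direction = 0 := by
  intro n
  induction n with
  | zero => intro H hH; omega
  | succ n ih =>
  intro H hH s a A C hC hsum
  by_cases hbot : H.direction = ⊥
  · rcases s.eq_empty_or_nonempty with rfl | ⟨i0, hi0⟩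
    · simp
    obtain ⟨x, hx⟩ := (hC i0 hi0).2.1
    have hsubset : ∀ i ∈ s, ∀ y ∈ C i, y ∈ H := by
      intro i hi y hy
      obtain ⟨h1, -, -, -, U, -, h2⟩ := hC i hi
      rw [h2] at hy
      exact h1 hy.1
    refine Eq.trans (Finset.sum_congr rfl fun i hi => ?_) (hsum x)
    have hd : (A i).direction = ⊥ := by
      rw [eq_bot_iff, ← hbot]
      exact AffineSubspace.direction_le (hC i hi).1
    obtain ⟨y, hy⟩ := (hC i hi).2.1
    have hyx : y = x := by
      have := AffineSubspace.vsub_mem_direction (hsubset i hi y hy) (hsubset i0 hi0 x hx)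
      rw [hbot] at this
      simpa [sub_eq_zero] using this
    rw [hyx] at hy
    rw [hd, finrank_bot]
    simp [hy]
  · obtain ⟨v, hv, hv0⟩ := Submodule.exists_mem_ne_zero_of_ne_bot hbot
    obtain ⟨l, hl⟩ := SeparatingDual.exists_ne_zero (R := ℝ) hv0
    set k : Submodule ℝ V := LinearMap.ker (l : V →ₗ[ℝ] ℝ) with hk
    let e : ι → ℤ := fun i => if (A i).direction ≤ k then 1 else -1
    have hee : ∀ i, e i * e i = 1 := by intro i; simp only [e]; split_ifs <;> simp
    have main := one_dim_euler s (fun i => a i * (-1) ^ Module.finrank ℝ (A i).direction * e i)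
      (fun i => l '' C i) e ?_ ?_
    · rw [← main]
      refine Finset.sum_congr rfl fun i _ => ?_
      rw [mul_assoc _ (e i), hee, mul_one]
    · intro i hi
      obtain ⟨h1, hne, hconv, hbd, U, hU, h2⟩ := hC i hi
      by_cases hd : (A i).direction ≤ k
      · left
        obtain ⟨x, hx⟩ := hne
        refine ⟨l x, ?_, by simp [e, hd]⟩
        ext t
        simp only [Set.mem_image, Set.mem_singleton_iff]
        constructor
        · rintro ⟨y, hy, rfl⟩
          rw [h2] at hx hy
          have := hd (AffineSubspace.vsub_mem_direction hy.1 hx.1)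
          simpa [hk, sub_eq_zero] using this
        · rintro rfl
          exact ⟨x, hx, rfl⟩
      · right
        obtain ⟨p, q, hpq, h3⟩ := open_interval_of_image (A i) (C i) U hne hconv hbd hU h2 l hd
        exact ⟨p, q, hpq, h3, by simp [e, hd]⟩
    · intro t
      by_cases hex : ∃ i ∈ s, t ∈ l '' C i
      swap
      · push Not at hex
        exact Finset.sum_eq_zero fun i hi => by simp only [if_neg (hex i hi), mul_zero]
      obtain ⟨i0, hi0, x0, hx0, hx0t⟩ := hex
      have hx0H : x0 ∈ H := by
        obtain ⟨h1, -, -, -, U, -, h2⟩ := hC i0 hi0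
        rw [h2] at hx0
        exact h1 hx0.1
      set P : AffineSubspace ℝ V := AffineSubspace.mk' x0 k with hP
      have hPmem : ∀ y, y ∈ P ↔ l y = t := by
        intro y
        rw [hP, AffineSubspace.mem_mk', hk, ← hx0t]
        simp [sub_eq_zero]
      have hPd : P.direction = k := AffineSubspace.direction_mk' _ _
      have hlt : Module.finrank ℝ (H ⊓ P).direction < n := by
        rw [AffineSubspace.direction_inf_of_mem hx0H ((hPmem x0).2 hx0t), hPd]
        have := finrank_inf_ker H.direction (l : V →ₗ[ℝ] ℝ) (fun hle => hl (by simpa using hle hv))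
        rw [← hk] at this
        omega
      have := ih (H ⊓ P) hlt (s.filter fun i => t ∈ l '' C i) a (fun i => A i ⊓ P)
        (fun i => C i ∩ P) ?_ ?_
      · rw [Finset.sum_filter] at this
        refine Eq.trans (Finset.sum_congr rfl fun i hi => ?_) this
        by_cases hit : t ∈ l '' C i
        swap
        · simp only [if_neg hit, mul_zero]
        simp only [if_pos hit, mul_one]
        rw [mul_assoc]
        congr 1
        obtain ⟨y, hy, hyt⟩ := hit
        obtain ⟨h1, -, -, -, U, -, h2⟩ := hC i hi
        rw [h2] at hy
        rw [AffineSubspace.direction_inf_of_mem hy.1 ((hPmem y).2 hyt), hPd]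
        by_cases hd : (A i).direction ≤ k
        · rw [inf_eq_left.2 hd]
          simp [e, hd]
        · rw [finrank_inf_ker (A i).direction (l : V →ₗ[ℝ] ℝ) hd]
          simp only [e, if_neg hd, pow_succ]
          ring
      · intro i hi
        rw [Finset.mem_filter] at hi
        obtain ⟨h1, hne, hconv, hbd, U, hU, h2⟩ := hC i hi.1
        obtain ⟨y, hy, hyt⟩ := hi.2
        refine ⟨inf_le_inf_right _ h1, ⟨y, hy, (hPmem y).2 hyt⟩, hconv.inter P.convex,
          hbd.subset Set.inter_subset_left, U, hU, ?_⟩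
        rw [h2]
        ext z
        simp only [Set.mem_inter_iff, SetLike.mem_coe, AffineSubspace.mem_inf_iff]
        tauto
      · intro x
        by_cases hx : x ∈ P
        · rw [Finset.sum_filter]
          refine Eq.trans (Finset.sum_congr rfl fun i hi => ?_) (hsum x)
          by_cases hxi : x ∈ C i
          · have : t ∈ l '' C i := ⟨x, hxi, (hPmem x).1 hx⟩
            rw [if_pos this]
            simp [hxi, hx]
          · simp [hxi]
        · refine Finset.sum_eq_zero fun i hi => ?_
          simp [hx]

lemma exists_coords (η : Finset (Euc N)) (h : AffineIndependent ℝ ((↑) : η → Euc N)) :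
    ∃ f : Euc N → (Euc N →ᵃ[ℝ] ℝ), ∀ v ∈ η, ∀ u ∈ η, f v u = if u = v then 1 else 0 := by
  obtain ⟨t, ht1, ht2, ht3⟩ := exists_subset_affineIndependent_affineSpan_eq_top
    (s := (η : Set (Euc N))) h
  let b : AffineBasis t ℝ (Euc N) := ⟨(↑), ht2, by simpa using ht3⟩
  refine ⟨fun v => if hv : v ∈ t then b.coord ⟨v, hv⟩ else 0, fun v hv u hu => ?_⟩
  have hv' : v ∈ t := ht1 hv
  have hu' : u ∈ t := ht1 hu
  have := b.coord_apply ⟨v, hv'⟩ ⟨u, hu'⟩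
  have hb : b ⟨u, hu'⟩ = u := rfl
  rw [hb] at this
  simp only [hv', dif_pos, this, Subtype.mk.injEq]
  simp only [eq_comm]

lemma coords_span (η : Finset (Euc N)) (f : Euc N → (Euc N →ᵃ[ℝ] ℝ))
    (hf : ∀ v ∈ η, ∀ u ∈ η, f v u = if u = v then 1 else 0) (y : Euc N)
    (hy : y ∈ affineSpan ℝ (η : Set (Euc N))) :
    ∑ v ∈ η, f v y = 1 ∧ ∑ v ∈ η, f v y • v = y := by
  refine affineSpan_induction (p := fun y => ∑ v ∈ η, f v y = 1 ∧ ∑ v ∈ η, f v y • v = y) hy ?_ ?_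
  · intro u hu
    have hu' : u ∈ η := hu
    constructor
    · rw [Finset.sum_congr rfl fun v hv => hf v hv u hu']
      simp [hu']
    · rw [Finset.sum_congr rfl fun v hv => by rw [hf v hv u hu']]
      simp [hu']
  · intro c u v w hu hv hw
    have : ∀ x, f x (c • (u -ᵥ v) +ᵥ w) = c * (f x u - f x v) + f x w := by
      intro x
      rw [AffineMap.map_vadd, map_smul, AffineMap.linearMap_vsub]
      simp
    simp only [this]
    constructor
    · rw [Finset.sum_add_distrib, ← Finset.mul_sum, Finset.sum_sub_distrib, hu.1, hv.1, hw.1]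
      simp
    · simp only [add_smul, mul_smul, sub_smul]
      rw [Finset.sum_add_distrib, ← Finset.smul_sum, Finset.sum_sub_distrib, hu.2, hv.2, hw.2]
      simp

lemma affine_eval_sum (f : Euc N →ᵃ[ℝ] ℝ) (η : Finset (Euc N)) (w : Euc N → ℝ)
    (hw : ∑ v ∈ η, w v = 1) : f (∑ v ∈ η, w v • v) = ∑ v ∈ η, w v * f v := by
  have h1 : ∀ y, f y = f.linear y + f 0 := fun y => congrFun f.decomp y
  rw [h1, map_sum]
  simp only [map_smul, smul_eq_mul]
  have h2 : ∀ v ∈ η, w v * f v = w v * f.linear v + w v * f 0 := fun v _ => by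
    rw [h1 v, mul_add]
  rw [Finset.sum_congr rfl h2, Finset.sum_add_distrib, ← Finset.sum_mul, hw, one_mul]

lemma coords_sum (η : Finset (Euc N)) (f : Euc N → (Euc N →ᵃ[ℝ] ℝ))
    (hf : ∀ v ∈ η, ∀ u ∈ η, f v u = if u = v then 1 else 0) (t : Finset (Euc N)) (ht : t ⊆ η)
    (w : Euc N → ℝ) (hw : ∑ v ∈ t, w v = 1) (u : Euc N) (hu : u ∈ η) :
    f u (∑ v ∈ t, w v • v) = if u ∈ t then w u else 0 := by
  rw [affine_eval_sum _ _ _ hw, Finset.sum_congr rfl fun v hv => by rw [hf u hu v (ht hv)]]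
  simp

lemma mem_hull_iff (η : Finset (Euc N)) (f : Euc N → (Euc N →ᵃ[ℝ] ℝ))
    (hf : ∀ v ∈ η, ∀ u ∈ η, f v u = if u = v then 1 else 0) (y : Euc N) :
    y ∈ convexHull ℝ (η : Set (Euc N)) ↔
      y ∈ affineSpan ℝ (η : Set (Euc N)) ∧ ∀ v ∈ η, 0 ≤ f v y := by
  constructor
  · intro hy
    refine ⟨convexHull_subset_affineSpan _ hy, fun v hv => ?_⟩
    obtain ⟨w, h0, h1, rfl⟩ := Finset.mem_convexHull'.1 hy
    rw [coords_sum η f hf η subset_rfl w h1 v hv, if_pos hv]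
    exact h0 v hv
  · rintro ⟨hy, h0⟩
    obtain ⟨h1, h2⟩ := coords_span η f hf y hy
    exact Finset.mem_convexHull'.2 ⟨fun v => f v y, h0, h1, h2⟩

lemma mem_open_iff (η : Finset (Euc N)) (f : Euc N → (Euc N →ᵃ[ℝ] ℝ))
    (hf : ∀ v ∈ η, ∀ u ∈ η, f v u = if u = v then 1 else 0) (y : Euc N) :
    y ∈ openSimplex η ↔
      y ∈ affineSpan ℝ (η : Set (Euc N)) ∧ ∀ v ∈ η, 0 < f v y := by
  have hfc : ∀ v, Continuous (f v) := fun v => (f v).continuous_of_finiteDimensional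
  unfold openSimplex
  rw [mem_intrinsicInterior]
  constructor
  · rintro ⟨y, hy, rfl⟩
    have hyspan : (y : Euc N) ∈ affineSpan ℝ (η : Set (Euc N)) := by
      exact (affineSpan_convexHull (𝕜 := ℝ) (η : Set (Euc N))).le y.2
    have hyhull : (y : Euc N) ∈ convexHull ℝ (η : Set (Euc N)) := by
      have := interior_subset hy
      exact this
    refine ⟨hyspan, fun v hv => ?_⟩
    have h0 := ((mem_hull_iff η f hf y).1 hyhull).2 v hv
    refine lt_of_le_of_ne h0 fun h1 => ?_
    have hv' : v ∈ affineSpan ℝ (convexHull ℝ (η : Set (Euc N))) :=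
      subset_affineSpan _ _ (subset_convexHull _ _ hv)
    let g : ℝ → affineSpan ℝ (convexHull ℝ (η : Set (Euc N))) := fun t =>
      ⟨AffineMap.lineMap (y : Euc N) v t, AffineMap.lineMap_mem t y.2 hv'⟩
    have hg : Continuous g := by
      refine Continuous.subtype_mk ?_ _
      exact AffineMap.lineMap_continuous
    have hg0 : g 0 = y := by ext; simp [g]
    have hev : ∀ᶠ t in nhds (0:ℝ), g t ∈ ((↑) ⁻¹' convexHull ℝ (η : Set (Euc N)) : Set _) := by
      apply hg.continuousAt.eventually
      rw [hg0]
      exact mem_interior_iff_mem_nhds.1 hy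
    have hev' : ∀ᶠ t in nhdsWithin (0:ℝ) (Set.Iio 0),
      g t ∈ ((↑) ⁻¹' convexHull ℝ (η : Set (Euc N)) : Set _) := nhdsWithin_le_nhds hev
    obtain ⟨t, ht, ht0⟩ := (hev'.and self_mem_nhdsWithin).exists
    have h2 := ((mem_hull_iff η f hf _).1 ht).2 v hv
    simp only [g, AffineMap.apply_lineMap, hf v hv v hv, if_true, ← h1] at h2
    simp [AffineMap.lineMap_apply] at h2
    have : t < 0 := ht0
    linarith
  · rintro ⟨hy, h0⟩
    refine ⟨⟨y, by rwa [affineSpan_convexHull]⟩, ?_, rfl⟩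
    rw [mem_interior]
    refine ⟨⋂ v ∈ η, {z | 0 < f v z}, ?_, ?_, ?_⟩
    · intro z hz
      simp only [Set.mem_iInter] at hz
      refine (mem_hull_iff η f hf _).2 ⟨?_, fun v hv => (hz v hv).le⟩
      exact (affineSpan_convexHull (𝕜 := ℝ) (η : Set (Euc N))).le z.2
    · refine isOpen_biInter_finset fun v _ => ?_
      exact isOpen_lt continuous_const ((hfc v).comp continuous_subtype_val)
    · simp only [Set.mem_iInter]
      exact h0

lemma openSimplex_sub_hull (η : Finset (Euc N)) :
    openSimplex η ⊆ convexHull ℝ (η : Set (Euc N)) := intrinsicInterior_subset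

lemma openSimplex_cell (η : Finset (Euc N)) (h : AffineIndependent ℝ ((↑) : η → Euc N)) :
    Convex ℝ (openSimplex η) ∧ Bornology.IsBounded (openSimplex η) ∧
    ∃ U, IsOpen U ∧ openSimplex η = (affineSpan ℝ (η : Set (Euc N)) : Set (Euc N)) ∩ U := by
  obtain ⟨f, hf⟩ := exists_coords η h
  have heq : openSimplex η = (affineSpan ℝ (η : Set (Euc N)) : Set (Euc N)) ∩
      ⋂ v ∈ η, {z | 0 < f v z} := by
    ext y
    rw [mem_open_iff η f hf]
    simp
  refine ⟨?_, ?_, _, ?_, heq⟩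
  · rw [heq]
    refine (AffineSubspace.convex _).inter (convex_iInter₂ fun v _ => ?_)
    exact (convex_Ioi (0:ℝ)).affine_preimage (f v)
  · exact ((isBounded_convexHull.2 η.finite_toSet.isBounded)).subset (openSimplex_sub_hull η)
  · exact isOpen_biInter_finset fun v _ =>
      isOpen_lt continuous_const (f v).continuous_of_finiteDimensional

lemma hull_subset_closure (η : Finset (Euc N)) (h : AffineIndependent ℝ ((↑) : η → Euc N)) :
    convexHull ℝ (η : Set (Euc N)) ⊆ closure (openSimplex η) := by
  obtain ⟨f, hf⟩ := exists_coords η h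
  intro x hx
  obtain ⟨c, hc⟩ : (openSimplex η).Nonempty :=
    Set.Nonempty.intrinsicInterior (convex_convexHull ℝ _) ⟨x, hx⟩
  have h1 := (mem_hull_iff η f hf x).1 hx
  have h2 := (mem_open_iff η f hf c).1 hc
  have hcont : Filter.Tendsto (fun t : ℝ => AffineMap.lineMap x c t) (nhdsWithin 0 (Set.Ioi 0))
      (nhds x) := by
    have : Continuous (fun t : ℝ => (AffineMap.lineMap x c t : Euc N)) :=
      AffineMap.lineMap_continuous
    have h3 := this.tendsto 0
    simp only [AffineMap.lineMap_apply_zero] at h3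
    exact h3.mono_left nhdsWithin_le_nhds
  refine mem_closure_of_tendsto hcont ?_
  have hlt : ∀ᶠ t in nhdsWithin (0:ℝ) (Set.Ioi 0), t < 1 :=
    nhdsWithin_le_nhds (gt_mem_nhds zero_lt_one)
  filter_upwards [self_mem_nhdsWithin, hlt] with t ht ht1
  have ht0 : 0 < t := ht
  refine (mem_open_iff η f hf _).2 ⟨AffineMap.lineMap_mem t h1.1 h2.1, fun v hv => ?_⟩
  rw [AffineMap.apply_lineMap, AffineMap.lineMap_apply_ring']
  nlinarith [mul_pos ht0 (h2.2 v hv), mul_nonneg (sub_nonneg.2 ht1.le) (h1.2 v hv)]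

lemma subset_of_mem_hull (τ t : Finset (Euc N)) (h : AffineIndependent ℝ ((↑) : τ → Euc N))
    (ht : t ⊆ τ) (x : Euc N) (hx : x ∈ openSimplex τ) (hxt : x ∈ convexHull ℝ (t : Set (Euc N))) :
    τ ⊆ t := by
  obtain ⟨f, hf⟩ := exists_coords τ h
  obtain ⟨w, h0, h1, rfl⟩ := Finset.mem_convexHull'.1 hxt
  intro v hv
  by_contra hvt
  have := ((mem_open_iff τ f hf _).1 hx).2 v hv
  rw [coords_sum τ f hf t ht w h1 v hv, if_neg hvt] at this
  exact lt_irrefl _ this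

lemma exists_open_face (σ : Finset (Euc N)) (h : AffineIndependent ℝ ((↑) : σ → Euc N))
    (y : Euc N) (hy : y ∈ convexHull ℝ (σ : Set (Euc N))) :
    ∃ t ⊆ σ, t.Nonempty ∧ y ∈ openSimplex t := by
  obtain ⟨w, h0, h1, rfl⟩ := Finset.mem_convexHull'.1 hy
  have hsub : σ.filter (fun v => w v ≠ 0) ⊆ σ := Finset.filter_subset _ _
  have h1' : ∑ v ∈ σ.filter (fun v => w v ≠ 0), w v = 1 := by
    rw [Finset.sum_filter_ne_zero, h1]
  have h2' : ∑ v ∈ σ.filter (fun v => w v ≠ 0), w v • v = ∑ v ∈ σ, w v • v := by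
    refine Finset.sum_filter_of_ne fun v _ hv h => hv (by rw [h, zero_smul])
  refine ⟨σ.filter (fun v => w v ≠ 0), hsub, ?_, ?_⟩
  · by_contra hne
    rw [Finset.not_nonempty_iff_eq_empty] at hne
    rw [hne] at h1'
    simp at h1'
  · have hind : AffineIndependent ℝ
        ((↑) : (σ.filter (fun v => w v ≠ 0) : Finset (Euc N)) → Euc N) :=
      AffineIndependent.mono (k := ℝ) (t := (σ : Set (Euc N))) h (by exact_mod_cast hsub)
    obtain ⟨f, hf⟩ := exists_coords _ hind
    rw [← h2']
    refine (mem_open_iff _ f hf _).2 ⟨?_, fun v hv => ?_⟩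
    · apply convexHull_subset_affineSpan
      exact Finset.mem_convexHull'.2 ⟨w, fun v hv => h0 v (hsub hv), h1', rfl⟩
    · rw [coords_sum _ f hf _ subset_rfl w h1' v hv, if_pos hv]
      rw [Finset.mem_filter] at hv
      exact lt_of_le_of_ne (h0 v hv.1) hv.2.symm

lemma face_subset_of_mem (L : SimplicialComplex ℝ (Euc N)) {τ σ : Finset (Euc N)}
    (hτ : τ ∈ L.faces) (hσ : σ ∈ L.faces) {x : Euc N} (hx : x ∈ openSimplex τ)
    (hxσ : x ∈ convexHull ℝ (σ : Set (Euc N))) : τ ⊆ σ := by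
  have h1 := L.inter_subset_convexHull hτ hσ ⟨openSimplex_sub_hull τ hx, hxσ⟩
  have h2 := subset_of_mem_hull τ (τ ∩ σ) (L.indep hτ) Finset.inter_subset_left x hx
    (by simpa using h1)
  exact h2.trans Finset.inter_subset_right

lemma face_eq_of_mem (L : SimplicialComplex ℝ (Euc N)) {τ σ : Finset (Euc N)}
    (hτ : τ ∈ L.faces) (hσ : σ ∈ L.faces) {x : Euc N} (hx : x ∈ openSimplex τ)
    (hxσ : x ∈ openSimplex σ) : τ = σ :=
  (face_subset_of_mem L hτ hσ hx (openSimplex_sub_hull _ hxσ)).antisymm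
    (face_subset_of_mem L hσ hτ hxσ (openSimplex_sub_hull _ hx))

lemma finrank_face (η : Finset (Euc N)) (h : AffineIndependent ℝ ((↑) : η → Euc N))
    (hne : η.Nonempty) :
    Module.finrank ℝ (affineSpan ℝ (η : Set (Euc N))).direction + 1 = η.card := by
  rw [direction_affineSpan]
  have hc : Fintype.card η = (η.card - 1) + 1 := by
    have := hne.card_pos
    rw [Fintype.card_coe]; omega
  have := h.finrank_vectorSpan hc
  have hv : vectorSpan ℝ (Set.range ((↑) : η → Euc N)) = vectorSpan ℝ (η : Set (Euc N)) :=
    congrArg _ Subtype.range_coe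
  have h3 := congrArg (fun S : Submodule ℝ (Euc N) => Module.finrank ℝ S) hv
  have h2 := hne.card_pos
  omega

/-- If `L` is a subdivision of the finite `n`-dimensional complex `K`, `τ` is an
`s`-simplex of `L` whose open simplex is contained in the open `p`-simplex `ζ`
of `K`, and `α` is an `r`-simplex of `K` having `ζ` as a proper face
(`p+1 ≤ r ≤ n`), then
`Σ_{i=s+1}^{r} (-1)^{i-s} #{η^i ∈ L | η open ⊆ α open, τ ≺ η^i} = (-1)^{r-s}`. -/
theorem subdivision_sign_sum {N n s p r : ℕ}
    (K L : SimplicialComplex ℝ (Euc N))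
    (hKfin : K.faces.Finite) (hLfin : L.faces.Finite) (hdim : IsNDim n K)
    (hsub : IsSubdivision K L)
    (τ ζ α : Finset (Euc N)) (hτ : τ ∈ L.faces) (hζ : ζ ∈ K.faces)
    (hα : α ∈ K.faces)
    (hτcard : τ.card = s + 1) (hζcard : ζ.card = p + 1) (hαcard : α.card = r + 1)
    (hcont : openSimplex τ ⊆ openSimplex ζ)
    (hface : ζ ⊆ α) (hpr : p + 1 ≤ r) (hrn : r ≤ n) :
    ∑ i ∈ Finset.Icc (s + 1) r, (-1 : ℤ) ^ (i - s) *
        ({η : Finset (Euc N) | η ∈ L.faces ∧ η.card = i + 1 ∧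
          openSimplex η ⊆ openSimplex α ∧ τ ⊆ η}.ncard : ℤ) =
      (-1 : ℤ) ^ (r - s) := by

  obtain ⟨x, hx⟩ : (openSimplex τ).Nonempty :=
    Set.Nonempty.intrinsicInterior (convex_convexHull ℝ _)
      (by simpa using L.nonempty_of_mem_faces hτ)
  have hxζ := hcont hx
  have hxα : x ∈ convexHull ℝ (α : Set (Euc N)) :=
    convexHull_mono (by exact_mod_cast hface) (openSimplex_sub_hull ζ hxζ)
  -- a small ball meeting only the closed simplices that contain `x`
  have hball : ∃ ε : ℝ, 0 < ε ∧ ∀ σ ∈ L.faces,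
      ((convexHull ℝ (σ : Set (Euc N))) ∩ Metric.ball x ε).Nonempty →
        x ∈ convexHull ℝ (σ : Set (Euc N)) := by
    have hev : ∀ᶠ y in nhds x, ∀ σ ∈ L.faces, y ∈ convexHull ℝ (σ : Set (Euc N)) →
        x ∈ convexHull ℝ (σ : Set (Euc N)) := by
      rw [Filter.eventually_all_finite hLfin]
      intro σ _
      by_cases hxσ : x ∈ convexHull ℝ (σ : Set (Euc N))
      · exact Filter.Eventually.of_forall fun _ _ => hxσ
      · have hcl : IsClosed (convexHull ℝ (σ : Set (Euc N))) :=
          (σ.finite_toSet.isCompact_convexHull ℝ).isClosed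
        filter_upwards [hcl.isOpen_compl.mem_nhds hxσ] with y hy hy'
        exact absurd hy' hy
    obtain ⟨ε, hε, h⟩ := Metric.eventually_nhds_iff_ball.1 hev
    exact ⟨ε, hε, fun σ hσ ⟨y, hy1, hy2⟩ => h y hy2 σ hσ hy1⟩
  obtain ⟨ε, hε, hball⟩ := hball
  have hSfin : {η : Finset (Euc N) | η ∈ L.faces ∧ openSimplex η ⊆ openSimplex α ∧ τ ⊆ η}.Finite :=
    hLfin.subset fun η h => h.1
  set S : Finset (Finset (Euc N)) := hSfin.toFinset with hS
  have hSmem : ∀ η, η ∈ S ↔ η ∈ L.faces ∧ openSimplex η ⊆ openSimplex α ∧ τ ⊆ η := by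
    intro η
    rw [hS, Set.Finite.mem_toFinset]; rfl
  -- cells
  have hcell : ∀ η : Finset (Euc N), AffineIndependent ℝ ((↑) : η → Euc N) →
      x ∈ convexHull ℝ (η : Set (Euc N)) →
      (openSimplex η ∩ Metric.ball x ε).Nonempty ∧ Convex ℝ (openSimplex η ∩ Metric.ball x ε) ∧
      Bornology.IsBounded (openSimplex η ∩ Metric.ball x ε) ∧
      ∃ U, IsOpen U ∧ openSimplex η ∩ Metric.ball x ε =
        (affineSpan ℝ (η : Set (Euc N)) : Set (Euc N)) ∩ U := by
    intro η hη hxη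
    obtain ⟨h1, h2, U, hU, h3⟩ := openSimplex_cell η hη
    refine ⟨?_, h1.inter (convex_ball x ε), h2.subset Set.inter_subset_left,
      U ∩ Metric.ball x ε, hU.inter Metric.isOpen_ball, ?_⟩
    · obtain ⟨y, hy1, hy2⟩ := mem_closure_iff.1 (hull_subset_closure η hη hxη) _
        Metric.isOpen_ball (Metric.mem_ball_self hε)
      exact ⟨y, hy2, hy1⟩
    · rw [h3, Set.inter_assoc]
  have heuler := euler_zero (ι := Option (Finset (Euc N))) (V := Euc N) _ ⊤ (Nat.lt_succ_self _)
    (Finset.insertNone S) (fun o => o.elim (-1) (fun _ => 1))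
    (fun o => affineSpan ℝ ((o.getD α : Finset (Euc N)) : Set (Euc N)))
    (fun o => openSimplex (o.getD α) ∩ Metric.ball x ε) ?_ ?_
  rotate_left
  · intro o ho
    refine ⟨le_top, ?_⟩
    rcases o with _ | η
    · exact hcell α (K.indep hα) hxα
    · have hη := (hSmem η).1 (by simpa using ho)
      refine hcell η (L.indep hη.1) (convexHull_mono (by exact_mod_cast hη.2.2)
        (openSimplex_sub_hull τ hx))
  · intro y
    rw [Finset.sum_insertNone]
    simp only [Option.elim, Option.getD, one_mul]
    by_cases hy : y ∈ openSimplex α ∩ Metric.ball x ε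
    · have hyL : y ∈ L.space := by
        rw [hsub.1]
        exact SimplicialComplex.convexHull_subset_space hα (openSimplex_sub_hull α hy.1)
      obtain ⟨σ, hσ, hyσ⟩ := SimplicialComplex.mem_space_iff.1 hyL
      obtain ⟨η, hησ, hηne, hyη⟩ := exists_open_face σ (L.indep hσ) y hyσ
      have hηL : η ∈ L.faces := L.down_closed hσ hησ hηne
      obtain ⟨t, htK, ht⟩ := hsub.2 η hηL
      have htα : t = α := face_eq_of_mem K htK hα (ht hyη) hy.1
      have hxη : x ∈ convexHull ℝ (η : Set (Euc N)) :=
        hball η hηL ⟨y, openSimplex_sub_hull η hyη, hy.2⟩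
      have hηS : η ∈ S := (hSmem η).2 ⟨hηL, htα ▸ ht, face_subset_of_mem L hτ hηL hx hxη⟩
      rw [Finset.sum_eq_single_of_mem η hηS]
      · rw [if_pos hy, if_pos ⟨hyη, hy.2⟩]
        norm_num
      · intro b hb hne
        rw [if_neg]
        intro h
        exact hne (face_eq_of_mem L ((hSmem b).1 hb).1 hηL h.1 hyη)
    · rw [if_neg hy, Finset.sum_eq_zero]
      · norm_num
      · intro b hb
        rw [if_neg]
        intro h
        exact hy ⟨((hSmem b).1 hb).2.1 h.1, h.2⟩
  rw [Finset.sum_insertNone] at heuler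
  simp only [Option.elim, Option.getD, one_mul] at heuler
  have hαrank := finrank_face α (K.indep hα) (K.nonempty_of_mem_faces hα)
  have hαr : Module.finrank ℝ (affineSpan ℝ (α : Set (Euc N))).direction = r := by omega
  rw [hαr] at heuler
  have hcard : ∀ η ∈ S, s + 2 ≤ η.card ∧ η.card ≤ r + 1 := by
    intro η hη
    obtain ⟨h1, h2, h3⟩ := (hSmem η).1 hη
    constructor
    · have hne : τ ≠ η := by
        rintro rfl
        have : ζ = α := face_eq_of_mem K hζ hα hxζ (h2 hx)
        rw [this] at hζcard
        omega
      have := Finset.card_lt_card (h3.ssubset_of_ne hne)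
      omega
    · rw [← hαcard]
      apply AffineIndependent.card_le_card_of_subset_affineSpan (k := ℝ) (L.indep h1)
      intro v hv
      have h4 : v ∈ closure (openSimplex η) :=
        hull_subset_closure η (L.indep h1) (subset_convexHull ℝ _ hv)
      have hcl : IsClosed (convexHull ℝ (α : Set (Euc N))) :=
        (α.finite_toSet.isCompact_convexHull ℝ).isClosed
      exact convexHull_subset_affineSpan _
        (closure_minimal (h2.trans (openSimplex_sub_hull α)) hcl h4)
  have hsr : s ≤ r := by
    by_contra hlt
    have : S = ∅ := Finset.eq_empty_of_forall_notMem fun η hη => by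
      have := hcard η hη
      omega
    rw [this] at heuler
    simp at heuler
  have hncard : ∀ i ∈ Finset.Icc (s + 1) r, (-1 : ℤ) ^ (i - s) *
        ({η : Finset (Euc N) | η ∈ L.faces ∧ η.card = i + 1 ∧
          openSimplex η ⊆ openSimplex α ∧ τ ⊆ η}.ncard : ℤ) =
      ∑ η ∈ S with η.card - 1 = i, (-1 : ℤ) ^ (η.card - 1 - s) := by
    intro i hi
    have hset : {η : Finset (Euc N) | η ∈ L.faces ∧ η.card = i + 1 ∧
          openSimplex η ⊆ openSimplex α ∧ τ ⊆ η} =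
        ((S.filter fun η => η.card - 1 = i : Finset (Finset (Euc N))) :
          Set (Finset (Euc N))) := by
      ext η
      simp only [Set.mem_ofPred_eq, Finset.coe_filter, hSmem]
      constructor
      · rintro ⟨h1, h2, h3, h4⟩
        exact ⟨⟨h1, h3, h4⟩, by omega⟩
      · rintro ⟨⟨h1, h3, h4⟩, h2⟩
        have := hcard η ((hSmem η).2 ⟨h1, h3, h4⟩)
        exact ⟨h1, by omega, h3, h4⟩
    rw [hset, Set.ncard_coe_finset]
    rw [Finset.sum_congr rfl (g := fun _ => (-1 : ℤ) ^ (i - s))]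
    · rw [Finset.sum_const, nsmul_eq_mul, mul_comm]
    · intro η hη
      rw [(Finset.mem_filter.1 hη).2]
  rw [Finset.sum_congr rfl hncard, Finset.sum_fiberwise_of_maps_to]
  swap
  · intro η hη
    have := hcard η hη
    rw [Finset.mem_Icc]
    omega
  have hpow : ∀ m, s ≤ m → (-1 : ℤ) ^ (m - s) = (-1) ^ s * (-1) ^ m := by
    intro m hm
    obtain ⟨d, rfl⟩ := Nat.exists_eq_add_of_le hm
    rw [Nat.add_sub_cancel_left, pow_add, ← mul_assoc, ← mul_pow]
    norm_num
  rw [hpow r hsr]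
  have hfin : ∑ η ∈ S, (-1 : ℤ) ^ (η.card - 1 - s) = (-1) ^ s *
      ∑ η ∈ S, (-1 : ℤ) ^ Module.finrank ℝ (affineSpan ℝ (η : Set (Euc N))).direction := by
    rw [Finset.mul_sum]
    refine Finset.sum_congr rfl fun η hη => ?_
    have h1 := hcard η hη
    have h2 := finrank_face η (L.indep ((hSmem η).1 hη).1)
      (L.nonempty_of_mem_faces ((hSmem η).1 hη).1)
    rw [hpow _ (by omega)]
    congr 2
    omega
  rw [hfin]
  congr 1
  linarith

end AngleDefectPaper
end
end

section
/- Let K be a finite n-dimensional simplicial complex embedded in Euclidean space, with n ≥ 2, and suppose that each (n−1)-simplex of K is a face of precisely two n-simplices of K. Then the stratified Euler characteristic of K equals its combinatorial Euler characteristic: χ^s(K) = χ(K). -/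
open Filter MeasureTheory Geometry
open scoped BigOperators

noncomputable section

attribute [local instance 0] Classical.propDecidable

namespace AngleDefectPaper

variable {N : ℕ}

open Polynomial in
lemma det_poly {m : ℕ} (A : Euc m →L[ℝ] Euc m) :
    ∃ p : ℝ[X], p.degree < ((m + 1 : ℕ) : WithBot ℕ) ∧
      ∀ t : ℝ, p.eval t = (ContinuousLinearMap.id ℝ (Euc m) + t • A).det := by
  classical
  let b := (EuclideanSpace.basisFun (Fin m) ℝ).toBasis
  let M := LinearMap.toMatrix b b (A : Euc m →ₗ[ℝ] Euc m)
  refine ⟨Matrix.det ((X : ℝ[X]) • M.map C + (1 : Matrix (Fin m) (Fin m) ℝ).map C), ?_, ?_⟩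
  · have h := natDegree_det_X_add_C_le M 1
    rw [Fintype.card_fin] at h
    exact lt_of_le_of_lt degree_le_natDegree (by exact_mod_cast Nat.lt_succ_of_le h)
  · intro t
    rw [← coe_evalRingHom, RingHom.map_det]
    unfold ContinuousLinearMap.det
    rw [← LinearMap.det_toMatrix b]
    congr 1
    have : LinearMap.toMatrix b b ((ContinuousLinearMap.id ℝ (Euc m) + t • A : Euc m →L[ℝ] Euc m) : Euc m →ₗ[ℝ] Euc m)
       = 1 + t • M := by
      rw [ContinuousLinearMap.toLinearMap_add, map_add, ContinuousLinearMap.toLinearMap_smul, map_smul]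
      congr 1
      exact LinearMap.toMatrix_id b
    rw [this]
    ext i j
    by_cases hij : i = j
    · subst hij; simp [Matrix.map_apply, add_comm]; ring
    · simp [Matrix.map_apply, hij]; ring

lemma det_interp {m : ℕ} (t : ℕ → ℝ) (ht : Function.Injective t) :
    ∃ L : ℕ → ℝ, ∑ i ∈ Finset.range (m+1), L i = 1 ∧
     ∀ A : Euc m →L[ℝ] Euc m, (ContinuousLinearMap.id ℝ (Euc m) + A).det =
       ∑ i ∈ Finset.range (m+1), L i * (ContinuousLinearMap.id ℝ (Euc m) + t i • A).det := by
  classical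
  refine ⟨fun i => (Lagrange.basis (Finset.range (m+1)) t i).eval 1, ?_, ?_⟩
  · rw [← Polynomial.eval_finsetSum, Lagrange.sum_basis ht.injOn (by simp)]
    simp
  · intro A
    obtain ⟨p, hp, hA⟩ := det_poly A
    have h := Lagrange.eq_interpolate (s := Finset.range (m+1)) (v := t) (f := p) ht.injOn (by simpa using hp)
    have h1 := hA 1
    rw [one_smul] at h1
    rw [← h1]
    conv_lhs => rw [h]
    rw [Lagrange.interpolate_apply, Polynomial.eval_finsetSum]
    refine Finset.sum_congr rfl fun i _ => ?_
    simp [hA, mul_comm]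

lemma lipschitz_indicator {m : ℕ} {C : NNReal} (g : Euc m → Euc m)
    (hg : LipschitzOnWith C g (Metric.closedBall 0 1)) (h0 : ∀ x, ‖x‖ = 1 → g x = 0) :
    LipschitzWith C ((Metric.closedBall (0 : Euc m) 1).indicator g) := by
  have key : ∀ x ∈ Metric.closedBall (0 : Euc m) 1, ∀ y ∉ Metric.closedBall (0 : Euc m) 1,
      dist (g x) 0 ≤ C * dist x y := by
    intro x hx y hy
    have hx1 : ‖x‖ ≤ 1 := by simpa using hx
    have hy1 : 1 ≤ ‖y‖ := by
      have : 1 < ‖y‖ := by simpa using hy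
      exact this.le
    obtain ⟨z, hz, hz1⟩ := (convex_segment (𝕜 := ℝ) x y).isPreconnected.intermediate_value
      (left_mem_segment ℝ x y) (right_mem_segment ℝ x y) continuous_norm.continuousOn
      (show (1 : ℝ) ∈ Set.Icc _ _ from ⟨hx1, hy1⟩)
    have h1 := hg.dist_le_mul x hx z (by simp [hz1])
    rw [h0 z hz1] at h1
    refine h1.trans ?_
    gcongr
    have := dist_add_dist_of_mem_segment hz
    linarith [dist_nonneg (x := z) (y := y)]
  refine LipschitzWith.of_dist_le_mul fun x y => ?_
  by_cases hx : x ∈ Metric.closedBall (0 : Euc m) 1 <;> by_cases hy : y ∈ Metric.closedBall (0 : Euc m) 1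
  · rw [Set.indicator_of_mem hx, Set.indicator_of_mem hy]; exact hg.dist_le_mul x hx y hy
  · rw [Set.indicator_of_mem hx, Set.indicator_of_notMem hy]; exact key x hx y hy
  · rw [Set.indicator_of_notMem hx, Set.indicator_of_mem hy, dist_comm, dist_comm x]; exact key y hy x hx
  · rw [Set.indicator_of_notMem hx, Set.indicator_of_notMem hy]; simp; positivity

lemma small_t {m : ℕ} {C : NNReal} (f : Euc m → Euc m) (hf : ContDiff ℝ 1 f)
    (hn : ∀ x, ‖f x‖ = 1) (hid : ∀ x, ‖x‖ = 1 → f x = x)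
    (hC : ∀ x ∈ Metric.closedBall (0 : Euc m) 1, ‖fderiv ℝ (fun x => f x - x) x‖₊ ≤ C)
    (t : ℝ) (ht0 : 0 ≤ t) (ht1 : t ≤ 1) (htC : t * C < 1) :
    ∫ x in Metric.closedBall (0 : Euc m) 1,
      (ContinuousLinearMap.id ℝ (Euc m) + t • fderiv ℝ (fun x => f x - x) x).det =
      volume.real (Metric.closedBall (0 : Euc m) 1) := by
  set g : Euc m → Euc m := fun x => f x - x with hgdef
  have hgc : ContDiff ℝ 1 g := hf.sub contDiff_id
  have hgd : Differentiable ℝ g := hgc.differentiable (by norm_num)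
  set B := Metric.closedBall (0 : Euc m) 1 with hB
  have hLip : LipschitzOnWith C g B :=
    (convex_closedBall _ _).lipschitzOnWith_of_nnnorm_fderiv_le (𝕜 := ℝ) (fun x _ => hgd x) hC
  have hL := lipschitz_indicator g hLip (fun x hx => by simp [hgdef, hid x hx])
  set G := B.indicator g with hG
  let F : Euc m → Euc m := fun x => x + t • G x
  have hFB : ∀ x ∈ B, F x = x + t • g x := fun x hx => by simp only [F, hG, Set.indicator_of_mem hx]
  have hFB' : ∀ x ∉ B, F x = x := fun x hx => by simp only [F, hG, Set.indicator_of_notMem hx, smul_zero, add_zero]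
  have hapx : ApproximatesLinearOn F ((ContinuousLinearEquiv.refl ℝ (Euc m) : Euc m ≃L[ℝ] Euc m) : Euc m →L[ℝ] Euc m) Set.univ (t.toNNReal * C) := by
    intro x _ y _
    have h1 : F x - F y - ((ContinuousLinearEquiv.refl ℝ (Euc m) : Euc m ≃L[ℝ] Euc m) : Euc m →L[ℝ] Euc m) (x - y) = t • (G x - G y) := by
      simp only [F, smul_sub, ContinuousLinearEquiv.coe_coe, ContinuousLinearEquiv.refl_apply]
      abel
    rw [h1, norm_smul, Real.norm_of_nonneg ht0, NNReal.coe_mul, Real.coe_toNNReal t ht0, mul_assoc]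
    have := hL.dist_le_mul x y
    rw [dist_eq_norm, dist_eq_norm] at this
    exact mul_le_mul_of_nonneg_left this ht0
  have hc : Subsingleton (Euc m) ∨ (t.toNNReal * C : NNReal) < ‖((ContinuousLinearEquiv.refl ℝ (Euc m)).symm : Euc m →L[ℝ] Euc m)‖₊⁻¹ := by
    rcases subsingleton_or_nontrivial (Euc m) with h | h
    · exact Or.inl h
    · right
      have : ‖((ContinuousLinearEquiv.refl ℝ (Euc m)).symm : Euc m →L[ℝ] Euc m)‖₊ = 1 := by
        rw [← NNReal.coe_inj]; exact ContinuousLinearMap.norm_id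
      rw [this, inv_one, ← NNReal.coe_lt_coe, NNReal.coe_mul, Real.coe_toNNReal t ht0]
      simpa using htC
  have hbij : Function.Bijective F := (hapx.toHomeomorph F hc).bijective
  have himg : F '' B = B := by
    apply Set.Subset.antisymm
    · rintro _ ⟨x, hx, rfl⟩
      rw [hFB x hx]
      have : x + t • g x = (1 - t) • x + t • f x := by simp only [hgdef]; module
      rw [this]
      exact convex_closedBall (0 : Euc m) 1 hx (by simp [hn]) (by linarith) ht0 (by ring)
    · intro y hy
      obtain ⟨x, rfl⟩ := hbij.2 y
      by_cases hx : x ∈ B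
      · exact ⟨x, hx, rfl⟩
      · rw [hFB' x hx] at hy; exact absurd hy hx
  have hder : ∀ x ∈ B, HasFDerivWithinAt F (ContinuousLinearMap.id ℝ (Euc m) + t • fderiv ℝ g x) B x := by
    intro x hx
    have h1 : HasFDerivAt (fun x => x + t • g x) (ContinuousLinearMap.id ℝ (Euc m) + t • fderiv ℝ g x) x :=
      (hasFDerivAt_id x).add ((hgd x).hasFDerivAt.const_smul t)
    exact h1.hasFDerivWithinAt.congr hFB (hFB x hx)
  have hintegral := integral_image_eq_integral_abs_det_fderiv_smul volume
    (Metric.isClosed_closedBall.measurableSet) hder hbij.1.injOn (fun _ => (1 : ℝ))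
  rw [himg] at hintegral
  simp only [smul_eq_mul, mul_one, integral_const, measureReal_restrict_apply_univ] at hintegral
  rw [hintegral]
  refine setIntegral_congr_fun Metric.isClosed_closedBall.measurableSet fun x hx => ?_
  refine (abs_of_nonneg ?_).symm
  by_contra hneg
  push Not at hneg
  have hcont : Continuous fun s : ℝ => (ContinuousLinearMap.id ℝ (Euc m) + s • fderiv ℝ g x).det :=
    ContinuousLinearMap.continuous_det.comp (by fun_prop)
  have h0 : (ContinuousLinearMap.id ℝ (Euc m) + (0:ℝ) • fderiv ℝ g x).det = 1 := by
    have : ContinuousLinearMap.id ℝ (Euc m) + (0:ℝ) • fderiv ℝ g x = ContinuousLinearMap.id ℝ (Euc m) := by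
      ext v; simp
    rw [this]; exact LinearMap.det_id
  obtain ⟨s, hs, hs0⟩ := intermediate_value_Icc' ht0 hcont.continuousOn
    (show (0:ℝ) ∈ Set.Icc _ _ from ⟨hneg.le, by rw [h0]; norm_num⟩)
  simp only at hs0
  have hker := LinearMap.bot_lt_ker_of_det_eq_zero hs0
  obtain ⟨v, hv, hv0⟩ := (Submodule.ne_bot_iff _).1 hker.ne'
  have hv' : v + s • fderiv ℝ g x v = 0 := by simpa using hv
  have h3 : ‖v‖ = s * ‖fderiv ℝ g x v‖ := by
    have := congrArg norm (eq_neg_of_add_eq_zero_left hv')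
    rwa [norm_neg, norm_smul, Real.norm_of_nonneg hs.1] at this
  have h4 : ‖fderiv ℝ g x v‖ ≤ C * ‖v‖ := by
    refine (ContinuousLinearMap.le_opNorm _ _).trans ?_
    gcongr
    exact hC x hx
  have h5 : s * C < 1 := lt_of_le_of_lt (by gcongr; exact hs.2) htC
  have hvpos : 0 < ‖v‖ := norm_pos_iff.2 hv0
  nlinarith [mul_le_mul_of_nonneg_left h4 hs.1]

theorem no_retract {m : ℕ} (f : Euc m → Euc m) (hf : ContDiff ℝ 1 f)
    (hn : ∀ x, ‖f x‖ = 1) (hid : ∀ x, ‖x‖ = 1 → f x = x) : False := by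
  set g : Euc m → Euc m := fun x => f x - x with hgdef
  have hgc : ContDiff ℝ 1 g := hf.sub contDiff_id
  have hfd : Differentiable ℝ f := hf.differentiable (by norm_num)
  set B := Metric.closedBall (0 : Euc m) 1 with hB
  have hBc : IsCompact B := isCompact_closedBall _ _
  have hg' : Continuous (fderiv ℝ g) := hgc.continuous_fderiv (by norm_num)
  obtain ⟨C, hC⟩ := hBc.exists_bound_of_continuousOn hg'.continuousOn
  have hC0 : 0 ≤ C := (norm_nonneg _).trans (hC 0 (by simp [hB]))
  let t : ℕ → ℝ := fun i => 1 / ((i + 1) * (C + 1))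
  have ht : Function.Injective t := by
    intro i j hij
    have h1 : (C + 1) ≠ 0 := by positivity
    simp only [t, one_div, inv_inj] at hij
    have := mul_right_cancel₀ h1 hij
    exact_mod_cast add_right_cancel this
  obtain ⟨L, hL1, hL⟩ := det_interp (m := m) t ht
  have hts : ∀ i, ∫ x in B, (ContinuousLinearMap.id ℝ (Euc m) + t i • fderiv ℝ g x).det = volume.real B := by
    intro i
    have hden : (1:ℝ) ≤ (i+1) := by linarith [(Nat.cast_nonneg i : (0:ℝ) ≤ i)]
    have hd2 : C + 1 ≤ (i+1) * (C+1) := by nlinarith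
    refine small_t (C := C.toNNReal) f hf hn hid (fun x hx => by
      rw [← NNReal.coe_le_coe, Real.coe_toNNReal C hC0]; exact hC x hx) (t i) (by positivity) ?_ ?_
    · simp only [t]; rw [div_le_one (by positivity)]; linarith
    · simp only [t]; rw [Real.coe_toNNReal C hC0, div_mul_eq_mul_div, div_lt_one (by positivity)]; linarith
  have hdet0 : ∀ x, (ContinuousLinearMap.id ℝ (Euc m) + fderiv ℝ g x).det = 0 := by
    intro x
    have h1 : fderiv ℝ g x = fderiv ℝ f x - ContinuousLinearMap.id ℝ (Euc m) := by
      exact ((hfd x).hasFDerivAt.sub (hasFDerivAt_id x)).fderiv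
    rw [h1, add_sub_cancel]
    by_contra hdet
    have hsurj : Function.Surjective (fderiv ℝ f x) := by
      have := LinearMap.range_eq_top.1 ((LinearMap.equivOfDetNeZero _ hdet).range)
      exact this
    obtain ⟨v, hv⟩ := hsurj (f x)
    have h2 := ((hfd x).hasFDerivAt).norm_sq
    have h3 : HasFDerivAt (fun x => ‖f x‖ ^ 2) (0 : Euc m →L[ℝ] ℝ) x := by
      simp only [hn]; exact hasFDerivAt_const _ _
    have h4 := congrArg (fun l => l v) (h2.unique h3)
    simp [hv, hn] at h4
  have hci : ∀ s : ℝ, IntegrableOn (fun x => (ContinuousLinearMap.id ℝ (Euc m) + s • fderiv ℝ g x).det) B := by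
    intro s
    refine ContinuousOn.integrableOn_compact hBc (Continuous.continuousOn ?_)
    exact ContinuousLinearMap.continuous_det.comp (by fun_prop)
  have h0 : ∫ x in B, (ContinuousLinearMap.id ℝ (Euc m) + fderiv ℝ g x).det = 0 := by simp [hdet0]
  have hL' : ∀ x, (ContinuousLinearMap.id ℝ (Euc m) + fderiv ℝ g x).det = _ := fun x => hL (fderiv ℝ g x)
  rw [integral_congr_ae (Filter.Eventually.of_forall hL')] at h0
  rw [integral_finsetSum _ (fun i _ => (hci (t i)).const_mul (L i))] at h0
  simp_rw [integral_const_mul, hts] at h0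
  rw [← Finset.sum_mul, hL1, one_mul] at h0
  have : 0 < volume.real B := by
    refine ENNReal.toReal_pos (Metric.measure_closedBall_pos _ _ (by norm_num)).ne' hBc.measure_lt_top.ne
  linarith


lemma smooth_approx {m : ℕ} (H : Euc m → Euc m) (hH : Continuous H) {K : Set (Euc m)}
    (hK : IsCompact K) {ε : ℝ} (hε : 0 < ε) :
    ∃ p : Euc m → Euc m, ContDiff ℝ 1 p ∧ ∀ x ∈ K, ‖p x - H x‖ < ε := by
  obtain ⟨R, hR⟩ := hK.isBounded.subset_closedBall (0 : Euc m)
  have huc : UniformContinuousOn H (Metric.closedBall 0 (R + 1)) :=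
    (isCompact_closedBall _ _).uniformContinuousOn_of_continuous hH.continuousOn
  obtain ⟨δ, hδ, h⟩ := Metric.uniformContinuousOn_iff.1 huc (ε / 2) (half_pos hε)
  obtain ⟨g, hg, hg2⟩ := hH.exists_contDiff_dist_le_of_forall_mem_ball_dist_le
    (lt_min hδ one_pos)
  refine ⟨g, hg.of_le (by simp), fun x hx => ?_⟩
  rw [← dist_eq_norm]
  refine (hg2 x (ε / 2) fun y hy => ?_).trans_lt (half_lt_self hε)
  have hx' : ‖x‖ ≤ R := by simpa using hR hx
  have hy' : dist y x < min δ 1 := hy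
  have hy2 : ‖y - x‖ < 1 := by rw [← dist_eq_norm]; exact hy'.trans_le (min_le_right _ _)
  refine (h y ?_ x ?_ (hy'.trans_le (min_le_left _ _))).le
  · have := norm_le_norm_add_norm_sub' y x
    simp; linarith
  · simp; linarith

instance tietzeEuc (m : ℕ) : TietzeExtension (Euc m) := TietzeExtension.of_tvs ℝ

lemma exists_zero {m : ℕ} (H : Euc m → Euc m) (hH : ContinuousOn H (Metric.closedBall 0 1))
    (h : ∀ x ∈ Metric.closedBall (0 : Euc m) 1, ‖H x - x‖ ≤ 1 / 2) :
    ∃ x ∈ Metric.closedBall (0 : Euc m) 1, H x = 0 := by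
  wlog hc : Continuous H generalizing H
  · obtain ⟨H', hH'⟩ := ContinuousMap.exists_restrict_eq (Metric.isClosed_closedBall (x := (0 : Euc m)) (ε := 1))
      ⟨_, hH.domRestrict⟩
    have heq : ∀ x ∈ Metric.closedBall (0 : Euc m) 1, H' x = H x := fun x hx =>
      congrArg (fun k : C(Metric.closedBall (0 : Euc m) 1, Euc m) => k ⟨x, hx⟩) hH'
    obtain ⟨x, hx, h0⟩ := this H' H'.continuous.continuousOn
      (fun x hx => by rw [heq x hx]; exact h x hx) H'.continuous
    exact ⟨x, hx, by rw [← heq x hx]; exact h0⟩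
  by_contra hcon
  push Not at hcon
  have hBc : IsCompact (Metric.closedBall (0 : Euc m) 1) := isCompact_closedBall _ _
  obtain ⟨d, hd, hd'⟩ := hBc.exists_forall_le' (a := 0) (hc.norm.continuousOn)
    (fun x hx => norm_pos_iff.2 (hcon x hx))
  obtain ⟨p, hp, hpH⟩ := smooth_approx H hc hBc (lt_min hd (by norm_num : (0:ℝ) < 1/4))
  have hp0 : ∀ x ∈ Metric.closedBall (0 : Euc m) 1, p x ≠ 0 := by
    intro x hx h0
    have := (hpH x hx).trans_le (min_le_left _ _)
    rw [h0, zero_sub, norm_neg] at this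
    exact absurd this (not_lt.2 (hd' x hx))
  have hpx : ∀ x ∈ Metric.closedBall (0 : Euc m) 1, ‖p x - x‖ < 3 / 4 := by
    intro x hx
    have h1 := (hpH x hx).trans_le (min_le_right _ _)
    have h2 := h x hx
    have h3 := norm_sub_le_norm_sub_add_norm_sub (p x) (H x) x
    linarith
  let χ : ContDiffBump (0 : Euc m) := ⟨3/4, 1, by norm_num, by norm_num⟩
  let F : Euc m → Euc m := fun x => x + χ x • (p x - x)
  have hF : ContDiff ℝ 1 F := contDiff_id.add (χ.contDiff.smul (hp.sub contDiff_id))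
  have hF1 : ∀ x, 1 ≤ ‖x‖ → F x = x := by
    intro x hx
    have : χ x = 0 := χ.zero_of_le_dist (by simpa [χ] using hx)
    simp [F, this]
  have hF0 : ∀ x, F x ≠ 0 := by
    intro x
    rcases le_or_gt 1 ‖x‖ with h1 | h1
    · rw [hF1 x h1]
      intro h0
      simp [h0] at h1
      linarith
    · have hxB : x ∈ Metric.closedBall (0 : Euc m) 1 := by simpa using h1.le
      rcases le_or_gt ‖x‖ (3/4) with h2 | h2
      · have : χ x = 1 := χ.one_of_mem_closedBall (by simpa [χ] using h2)
        simp only [F, this, one_smul, add_sub_cancel]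
        exact hp0 x hxB
      · intro h0
        have h3 : ‖x‖ = ‖χ x • (p x - x)‖ := by
          have := congrArg norm (eq_neg_of_add_eq_zero_left h0)
          rwa [norm_neg] at this
        rw [norm_smul, Real.norm_of_nonneg χ.nonneg] at h3
        have h4 := hpx x hxB
        have h5 : χ x ≤ 1 := χ.le_one
        have h6 : 0 ≤ χ x := χ.nonneg
        nlinarith [norm_nonneg (p x - x)]
  refine no_retract (fun x => ‖F x‖⁻¹ • F x) ?_ ?_ ?_
  · exact ((hF.norm ℝ hF0).inv (fun x => norm_ne_zero_iff.2 (hF0 x))).smul hF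
  · intro x
    rw [norm_smul, norm_inv, norm_norm, inv_mul_cancel₀ (norm_ne_zero_iff.2 (hF0 x))]
  · intro x hx
    simp only [hF1 x hx.ge, hx, inv_one, one_smul]

lemma image_ball_mem_nhds {m : ℕ} (hm : 0 < m) (f : Euc m → Euc m)
    (hf : ContinuousOn f (Metric.closedBall 0 1)) (hinj : Set.InjOn f (Metric.closedBall 0 1)) :
    f '' (Metric.closedBall 0 1) ∈ nhds (f 0) := by
  have : Nonempty (Fin m) := ⟨⟨0, hm⟩⟩
  set B := Metric.closedBall (0 : Euc m) 1 with hB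
  have hBc : IsCompact B := isCompact_closedBall _ _
  have h0B : (0 : Euc m) ∈ B := by simp [hB]
  by_contra hcon
  have hKc : IsCompact (f '' B) := hBc.image_of_continuousOn hf
  have : CompactSpace B := isCompact_iff_compactSpace.1 hBc
  have he : Topology.IsClosedEmbedding (B.domRestrict f) :=
    hf.domRestrict.isClosedEmbedding (Set.injOn_iff_injective.1 hinj)
  obtain ⟨G, hG⟩ := ContinuousMap.exists_extension he (⟨Subtype.val, continuous_subtype_val⟩ : C(B, Euc m))
  have hGf : ∀ x ∈ B, G (f x) = x := fun x hx =>
    congrArg (fun k : C(B, Euc m) => k ⟨x, hx⟩) hG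
  have hG0 : G (f 0) = 0 := hGf 0 h0B
  obtain ⟨e, he0, hGe⟩ : ∃ e > 0, ∀ y, dist y (f 0) < 3 * e → ‖G y‖ < 1 / 10 := by
    obtain ⟨d, hd, h⟩ := Metric.continuous_iff.1 G.continuous (f 0) (1/10) (by norm_num)
    refine ⟨d / 3, by positivity, fun y hy => ?_⟩
    have := h y (by linarith)
    rwa [hG0, dist_zero_right] at this
  obtain ⟨c, hc, hcK⟩ : ∃ c, dist c (f 0) < e ∧ c ∉ f '' B := by
    by_contra hno
    push Not at hno
    exact hcon (Filter.mem_of_superset (Metric.ball_mem_nhds _ he0) hno)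
  have hS1 : IsCompact (f '' B ∩ {y | e ≤ dist y c}) :=
    hKc.inter_right (isClosed_le continuous_const (by fun_prop))
  obtain ⟨d, hd, hd'⟩ := hS1.exists_forall_le' (a := 0) (f := fun y => ‖G y‖) (by fun_prop) (by
    rintro y ⟨⟨x, hx, rfl⟩, hy⟩
    rw [hGf x hx, norm_pos_iff]
    rintro rfl
    have : e ≤ dist (f 0) c := hy
    rw [dist_comm] at this
    linarith)
  have hη : 0 < min d (1/10) / 2 := by positivity
  obtain ⟨p, hp, hpG⟩ := smooth_approx G G.continuous (hKc.union (isCompact_sphere c e)) hη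
  obtain ⟨w, hw, hwS⟩ : ∃ w, ‖w‖ < min d (1/10) / 2 ∧ w ∉ p '' (Metric.sphere c e) := by
    by_contra hno
    push Not at hno
    have h1 : volume (p '' (Metric.sphere c e)) = 0 :=
      addHaar_image_eq_zero_of_differentiableOn_of_addHaar_eq_zero volume
        (hp.differentiable (by norm_num)).differentiableOn
        (Measure.addHaar_sphere_of_ne_zero volume c he0.ne')
    have h2 : Metric.ball (0 : Euc m) (min d (1/10) / 2) ⊆ p '' (Metric.sphere c e) := fun w hw => hno w (by simpa using hw)
    exact (Metric.measure_ball_pos volume (0 : Euc m) hη).ne' (measure_mono_null h2 h1)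
  have hP : ∀ y ∈ f '' B ∪ Metric.sphere c e, ‖(p y - w) - G y‖ < min d (1/10) := by
    intro y hy
    have := hpG y hy
    have h3 : (p y - w) - G y = (p y - G y) - w := by abel
    rw [h3]
    linarith [norm_sub_le (p y - G y) w]
  let Φ : Euc m → Euc m := fun y => c + max (e / dist y c) 1 • (y - c)
  have hne : ∀ x ∈ B, dist (f x) c ≠ 0 := by
    intro x hx h0
    exact hcK ⟨x, hx, dist_eq_zero.1 h0⟩
  have hΦ1 : ∀ y, dist y c ≠ 0 → e ≤ dist y c → Φ y = y := by
    intro y h0 hy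
    have : max (e / dist y c) 1 = 1 := max_eq_right (by
      rw [div_le_one (lt_of_le_of_ne dist_nonneg (Ne.symm h0))]; exact hy)
    simp [Φ, this]
  have hΦ2 : ∀ y, dist y c ≠ 0 → dist y c < e → Φ y ∈ Metric.sphere c e := by
    intro y h0 hy
    have hpos : 0 < dist y c := lt_of_le_of_ne dist_nonneg (Ne.symm h0)
    have : max (e / dist y c) 1 = e / dist y c := max_eq_left (by
      rw [one_le_div hpos]; exact hy.le)
    simp only [Φ, this, mem_sphere_iff_norm, add_sub_cancel_left, norm_smul, ← dist_eq_norm]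
    rw [Real.norm_of_nonneg (by positivity)]
    field_simp
  have hHc : ContinuousOn (fun x => p (Φ (f x)) - w) B := by
    refine ContinuousOn.sub (hp.continuous.comp_continuousOn ?_) continuousOn_const
    have hd : ContinuousOn (fun x => dist (f x) c) B := (show Continuous fun z : Euc m => dist z c by fun_prop).comp_continuousOn hf
    exact continuousOn_const.add (((continuousOn_const.div hd hne).sup continuousOn_const).smul
      (hf.sub continuousOn_const))
  obtain ⟨x, hx, hx0⟩ := exists_zero _ hHc (by
    intro x hx
    rcases le_or_gt e (dist (f x) c) with h1 | h1
    · rw [hΦ1 _ (hne x hx) h1]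
      have := hP (f x) (Or.inl ⟨x, hx, rfl⟩)
      rw [hGf x hx] at this
      linarith [min_le_right d (1/10)]
    · have h2 := hΦ2 _ (hne x hx) h1
      have h3 := hP _ (Or.inr h2)
      have h2' : dist (Φ (f x)) c = e := h2
      have h4 := hGe (Φ (f x)) (by linarith [dist_triangle (Φ (f x)) c (f 0)])
      have h5 := hGe (f x) (by linarith [dist_triangle (f x) c (f 0)])
      rw [hGf x hx] at h5
      have h6 : p (Φ (f x)) - w - x = (p (Φ (f x)) - w - G (Φ (f x))) + G (Φ (f x)) - x := by abel
      rw [h6]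
      have h7 := norm_sub_le ((p (Φ (f x)) - w - G (Φ (f x))) + G (Φ (f x))) x
      have h8 := norm_add_le (p (Φ (f x)) - w - G (Φ (f x))) (G (Φ (f x)))
      linarith [min_le_right d (1/10)])
  rcases le_or_gt e (dist (f x) c) with h1 | h1
  · rw [hΦ1 _ (hne x hx) h1] at hx0
    have h2 := hP (f x) (Or.inl ⟨x, hx, rfl⟩)
    rw [hx0, zero_sub, norm_neg] at h2
    have h3 := hd' (f x) ⟨⟨x, hx, rfl⟩, h1⟩
    linarith [min_le_left d (1/10)]
  · exact hwS ⟨_, hΦ2 _ (hne x hx) h1, sub_eq_zero.1 hx0⟩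

/-- Invariance of domain, in equidimensional finite-dimensional spaces. -/
theorem invariance_of_domain {E F : Type*} [NormedAddCommGroup E] [NormedSpace ℝ E]
    [FiniteDimensional ℝ E] [NormedAddCommGroup F] [NormedSpace ℝ F] [FiniteDimensional ℝ F]
    (hEF : Module.finrank ℝ E = Module.finrank ℝ F)
    (f : E → F) {x : E} {O : Set E} (hO : O ∈ nhds x) (hf : ContinuousOn f O) (hinj : Set.InjOn f O) :
    f '' O ∈ nhds (f x) := by
  set m := Module.finrank ℝ E with hm
  rcases Nat.eq_zero_or_pos m with h0 | hpos
  · have : Subsingleton F := Module.finrank_zero_iff.1 (hEF.symm.trans h0)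
    have : f '' O = Set.univ := by
      refine Set.eq_univ_of_forall fun y => ⟨x, mem_of_mem_nhds hO, Subsingleton.elim _ _⟩
    rw [this]; exact Filter.univ_mem
  · let a : Euc m ≃L[ℝ] E := ContinuousLinearEquiv.ofFinrankEq (by simp [hm])
    let b : F ≃L[ℝ] Euc m := ContinuousLinearEquiv.ofFinrankEq (by simp [← hEF])
    have hq : Tendsto (fun v => x + a v) (nhds 0) (nhds x) := by
      have : Continuous fun v => x + a v := by fun_prop
      simpa using this.tendsto 0
    obtain ⟨r, hr, hrO⟩ := Metric.nhds_basis_closedBall.mem_iff.1 (hq hO)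
    let q : Euc m → E := fun v => x + a (r • v)
    have hqO : Set.MapsTo q (Metric.closedBall 0 1) O := by
      intro v hv
      refine hrO (?_ : r • v ∈ _)
      have : ‖v‖ ≤ 1 := by simpa using hv
      simp only [mem_closedBall_zero_iff, norm_smul, Real.norm_of_nonneg hr.le]
      nlinarith
    have hqc : Continuous q := by fun_prop
    have hqi : Function.Injective q := by
      intro v w hvw
      exact smul_right_injective _ hr.ne' (a.injective (add_left_cancel hvw))
    have := image_ball_mem_nhds hpos (fun v => b (f (q v)))
      (b.continuous.comp_continuousOn (hf.comp hqc.continuousOn hqO))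
      (fun v hv w hw hvw => hqi (hinj (hqO hv) (hqO hw) (b.injective hvw)))
    have hq0 : q 0 = x := by simp [q]
    simp only [hq0] at this
    have h2 := b.continuous.continuousAt.preimage_mem_nhds this
    refine Filter.mem_of_superset h2 ?_
    rintro y ⟨v, hv, hvy⟩
    exact ⟨q v, hqO hv, b.injective hvy⟩

/-- No continuous injection from an open set into a space of smaller dimension. -/
theorem no_embedding_of_lt {E F : Type*} [NormedAddCommGroup E] [NormedSpace ℝ E]
    [FiniteDimensional ℝ E] [NormedAddCommGroup F] [NormedSpace ℝ F] [FiniteDimensional ℝ F]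
    (hEF : Module.finrank ℝ F < Module.finrank ℝ E)
    (f : E → F) {x : E} {O : Set E} (hO : O ∈ nhds x) (hf : ContinuousOn f O) (hinj : Set.InjOn f O) :
    False := by
  let k := Module.finrank ℝ E - Module.finrank ℝ F
  let i : F →ₗ[ℝ] F × Euc k := LinearMap.inl ℝ F (Euc k)
  have hi : Function.Injective i := LinearMap.inl_injective
  have hic : Continuous i := i.continuous_of_finiteDimensional
  have hfr : Module.finrank ℝ (F × Euc k) = Module.finrank ℝ E := by
    rw [Module.finrank_prod, finrank_euclideanSpace_fin]; omega
  have h := invariance_of_domain hfr.symm (fun y => i (f y)) hO (hic.comp_continuousOn hf)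
    (fun y hy z hz hyz => hinj hy hz (hi hyz))
  have h2 : (LinearMap.range i : Submodule ℝ (F × Euc k)) = ⊤ := by
    refine Submodule.eq_top_of_nonempty_interior' _ ⟨i (f x), ?_⟩
    refine mem_interior_iff_mem_nhds.2 (Filter.mem_of_superset h ?_)
    rintro _ ⟨y, _, rfl⟩
    exact ⟨f y, rfl⟩
  have := LinearMap.finrank_range_le i
  rw [h2, finrank_top, hfr] at this
  omega

/-- A local Euclidean model of `S` at `y`. -/
def LocModel (n : ℕ) (S : Set (Euc N)) (y : Euc N) : Prop :=
  ∃ (φ : Euc N → Euc n) (ψ : Euc n → Euc N) (W : Set (Euc N)) (O : Set (Euc n)),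
    W ∈ nhdsWithin y S ∧ ContinuousOn φ W ∧ Set.InjOn φ W ∧
    O ∈ nhds (0 : Euc n) ∧ ContinuousOn ψ O ∧ Set.InjOn ψ O ∧ ψ 0 = y ∧ Set.MapsTo ψ O S

lemma LocModel.of {n : ℕ} {S : Set (Euc N)} {y : Euc N} {E : Type*} [NormedAddCommGroup E]
    [NormedSpace ℝ E] [FiniteDimensional ℝ E] (hE : Module.finrank ℝ E = n)
    (φ : Euc N → E) (ψ : E → Euc N) (W : Set (Euc N)) (O : Set E)
    (hW : W ∈ nhdsWithin y S) (h1 : ContinuousOn φ W) (h2 : Set.InjOn φ W)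
    (hO : O ∈ nhds (0 : E)) (h3 : ContinuousOn ψ O) (h4 : Set.InjOn ψ O) (h5 : ψ 0 = y)
    (h6 : Set.MapsTo ψ O S) : LocModel n S y := by
  let e : E ≃L[ℝ] Euc n := ContinuousLinearEquiv.ofFinrankEq (by simp [hE])
  have he : Continuous e := e.continuous
  have hes : Continuous e.symm := e.symm.continuous
  refine ⟨fun z => e (φ z), fun v => ψ (e.symm v), W, e.symm ⁻¹' O, hW,
    he.comp_continuousOn h1, fun z hz w hw h => h2 hz hw (e.injective h), ?_,
    h3.comp hes.continuousOn (fun v hv => hv), fun v hv w hw h => e.symm.injective (h4 hv hw h),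
    by simp [h5], fun v hv => h6 hv⟩
  apply hes.continuousAt.preimage_mem_nhds
  simpa using hO

lemma tcone_le_one {r : ℕ} (hr : r ≤ 1) {p : ℝ × ℝ} (hp : p ∈ Tcone r) : p.2 = 0 ∧ 0 ≤ p.1 := by
  rcases hp with hp | hp
  · have : p = 0 := hp
    simp [this]
  · simp only [Set.mem_iUnion] at hp
    obtain ⟨k, hk, t, ht0, ht1, rfl⟩ := hp
    have : k = 0 := by have := Finset.mem_range.1 hk; omega
    subst this
    simp [ht0]

lemma zero_mem_tcone (r : ℕ) : (0 : ℝ × ℝ) ∈ Tcone r := Or.inl rfl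

lemma leg_mem_tcone {r k : ℕ} (hk : k < r) {t : ℝ} (h0 : 0 ≤ t) (h1 : t < 1) :
    ((t, t * k) : ℝ × ℝ) ∈ Tcone r := by
  refine Or.inr ?_
  simp only [Set.mem_iUnion]
  exact ⟨k, Finset.mem_range.2 hk, t, h0, h1, by ext <;> simp⟩

lemma no_cone {n r : ℕ} (hn : 1 ≤ n) (hr : r ≠ 2) {S : Set (Euc N)} {y : Euc N}
    (hS : LocModel n S y) {U : Set (Euc N)} (hU : U ∈ nhdsWithin y S) (hUS : U ⊆ S) (hyU : y ∈ U)
    (h : U ≃ₜ (Tcone r) × Euc (n - 1)) (hy : ((h ⟨y, hyU⟩).1 : ℝ × ℝ) = 0) : False := by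
  obtain ⟨φ, ψ, W, O, hW, hφc, hφi, hO, hψc, hψi, hψ0, hψS⟩ := hS
  have hfr : Module.finrank ℝ (ℝ × Euc (n - 1)) = n := by
    rw [Module.finrank_prod, finrank_euclideanSpace_fin, Module.finrank_self]; omega
  set v0 := (h ⟨y, hyU⟩).2 with hv0
  have hyS : y ∈ S := hUS hyU
  rcases lt_or_gt_of_ne hr with hlt | hgt
  · -- r ≤ 1
    let H : Euc N → ℝ × Euc (n - 1) := fun z =>
      if hz : z ∈ U then (((h ⟨z, hz⟩).1 : ℝ × ℝ).1, (h ⟨z, hz⟩).2) else 0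
    have hHr : ∀ z (hz : z ∈ U), H z = (((h ⟨z, hz⟩).1 : ℝ × ℝ).1, (h ⟨z, hz⟩).2) := fun z hz => by
      simp only [H, dif_pos hz]
    have hHc : ContinuousOn H U := by
      rw [continuousOn_iff_continuous_domRestrict]
      have : U.domRestrict H = fun z : U => (((h z).1 : ℝ × ℝ).1, (h z).2) := by
        funext z; exact hHr z z.2
      rw [this]
      fun_prop
    have hHi : Set.InjOn H U := by
      intro z hz w hw hzw
      rw [hHr z hz, hHr w hw] at hzw
      have a1 := congrArg Prod.fst hzw
      have a2 := congrArg Prod.snd hzw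
      simp only at a1 a2
      have b1 := (tcone_le_one (by omega) (h ⟨z, hz⟩).1.2).1
      have b2 := (tcone_le_one (by omega) (h ⟨w, hw⟩).1.2).1
      have : h ⟨z, hz⟩ = h ⟨w, hw⟩ :=
        Prod.ext (Subtype.ext (Prod.ext a1 (b1.trans b2.symm))) a2
      exact congrArg Subtype.val (h.injective this)
    have hO' : O ∩ ψ ⁻¹' U ∈ nhds (0 : Euc n) := by
      have t1 : Tendsto ψ (nhds 0) (nhdsWithin y S) := by
        refine tendsto_nhdsWithin_iff.2 ⟨?_, Filter.mem_of_superset hO hψS⟩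
        have := (hψc.continuousAt hO).tendsto
        rwa [hψ0] at this
      exact Filter.inter_mem hO (t1 hU)
    have hinv := invariance_of_domain (E := Euc n) (F := ℝ × Euc (n - 1)) (by rw [hfr]; simp)
      (fun v => H (ψ v)) hO' (hHc.comp (hψc.mono Set.inter_subset_left) (fun v hv => hv.2))
      (fun v hv w hw hvw => hψi hv.1 hw.1 (hHi hv.2 hw.2 hvw))
    simp only [hψ0] at hinv
    rw [hHr y hyU, hy] at hinv
    have t2 : Tendsto (fun t : ℝ => ((t, v0) : ℝ × Euc (n - 1))) (nhdsWithin 0 (Set.Iio 0)) (nhds (0, v0)) := by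
      have : Continuous fun t : ℝ => ((t, v0) : ℝ × Euc (n - 1)) := by fun_prop
      exact (this.tendsto 0).mono_left nhdsWithin_le_nhds
    obtain ⟨t, ht, ht0⟩ := ((t2.eventually hinv).and self_mem_nhdsWithin).exists
    obtain ⟨v, hv, hvt⟩ := ht
    have hvU : ψ v ∈ U := hv.2
    simp only [hHr (ψ v) hvU] at hvt
    have := (tcone_le_one (by omega) (h ⟨ψ v, hvU⟩).1.2).2
    have e1 := congrArg Prod.fst hvt
    simp only at e1
    have ht0' : t < 0 := ht0
    linarith
  · -- r ≥ 3
    have hcl : ∀ s : ℝ, 0 ≤ max 0 (min s (1/2)) ∧ max 0 (min s (1/2)) < 1 := fun s =>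
      ⟨le_max_left _ _, max_lt (by norm_num) ((min_le_right _ _).trans_lt (by norm_num))⟩
    have hτm : ∀ s : ℝ, ((max 0 (min s (1/2)) + max 0 (min (-s) (1/2)), max 0 (min (-s) (1/2))) : ℝ × ℝ) ∈ Tcone r := by
      intro s
      rcases le_total 0 s with hs | hs
      · have e : max 0 (min (-s) (1/2)) = 0 := max_eq_left ((min_le_left _ _).trans (by linarith))
        rw [e, add_zero]
        have := leg_mem_tcone (r := r) (k := 0) (by omega) (hcl s).1 (hcl s).2
        simpa using this
      · have e : max 0 (min s (1/2)) = 0 := max_eq_left ((min_le_left _ _).trans (by linarith))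
        rw [e, zero_add]
        have := leg_mem_tcone (r := r) (k := 1) (by omega) (hcl (-s)).1 (hcl (-s)).2
        simpa using this
    let τ : ℝ → Tcone r := fun s => ⟨_, hτm s⟩
    have hτc : Continuous τ := by
      refine Continuous.subtype_mk ?_ _
      fun_prop
    have hτ0 : τ 0 = ⟨0, zero_mem_tcone r⟩ := by
      apply Subtype.ext; simp only [τ]; norm_num
    have hτs : ∀ s : ℝ, |s| < 1/2 → s = (τ s : ℝ × ℝ).1 - 2 * (τ s : ℝ × ℝ).2 := by
      intro s hs
      rw [abs_lt] at hs
      simp only [τ]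
      rw [min_eq_left (by linarith), min_eq_left (by linarith)]
      rcases le_total 0 s with h0 | h0
      · rw [max_eq_right h0, max_eq_left (by linarith)]; ring
      · rw [max_eq_left h0, max_eq_right (by linarith)]; ring
    have hτle : ∀ s : ℝ, (τ s : ℝ × ℝ).2 ≤ (τ s : ℝ × ℝ).1 := by
      intro s
      simp only [τ]
      linarith [(hcl s).1]
    let ℓ : ℝ → Tcone r := fun s => ⟨_, leg_mem_tcone (k := 2) (by omega) (hcl s).1 (hcl s).2⟩
    have hℓc : Continuous ℓ := by
      refine Continuous.subtype_mk ?_ _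
      fun_prop
    have hℓ0 : ℓ 0 = ⟨0, zero_mem_tcone r⟩ := by
      apply Subtype.ext; simp only [ℓ]; norm_num
    have hsy : h.symm (⟨0, zero_mem_tcone r⟩, v0) = ⟨y, hyU⟩ := by
      rw [Homeomorph.symm_apply_eq]
      exact Prod.ext (Subtype.ext hy.symm) rfl
    let M : ℝ × Euc (n - 1) → Euc N := fun q => (h.symm (τ q.1, q.2) : Euc N)
    have hMc : Continuous M := by fun_prop
    have hM0 : M (0, v0) = y := by simp only [M, hτ0, hsy]
    have hMi : Set.InjOn M {q | |q.1| < 1/2} := by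
      intro q hq q' hq' hqq
      have := h.symm.injective (Subtype.ext hqq)
      have a1 := congrArg Prod.fst this
      have a2 := congrArg Prod.snd this
      simp only at a1 a2
      refine Prod.ext ?_ a2
      rw [hτs q.1 hq, hτs q'.1 hq', a1]
    have hMW : Tendsto M (nhds (0, v0)) (nhdsWithin y S) := by
      refine tendsto_nhdsWithin_iff.2 ⟨?_, Eventually.of_forall fun q => hUS (h.symm _).2⟩
      have := hMc.tendsto (0, v0)
      rwa [hM0] at this
    have hO' : {q : ℝ × Euc (n - 1) | |q.1| < 1/2} ∩ M ⁻¹' W ∈ nhds ((0 : ℝ), v0) := by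
      refine Filter.inter_mem ?_ (hMW hW)
      refine IsOpen.mem_nhds (isOpen_lt (by fun_prop) continuous_const) ?_
      simp
    have hinv := invariance_of_domain (E := ℝ × Euc (n - 1)) (F := Euc n) (by rw [hfr]; simp)
      (fun q => φ (M q)) hO' (hφc.comp hMc.continuousOn (fun q hq => hq.2))
      (fun v hv w hw hvw => hMi hv.1 hw.1 (hφi hv.2 hw.2 hvw))
    simp only [hM0] at hinv
    let P : ℝ → Euc N := fun t => (h.symm (ℓ t, v0) : Euc N)
    have hPc : Continuous P := by fun_prop
    have hP0 : P 0 = y := by simp only [P, hℓ0, hsy]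
    have hPS : Tendsto P (nhds 0) (nhdsWithin y S) := by
      refine tendsto_nhdsWithin_iff.2 ⟨?_, Eventually.of_forall fun q => hUS (h.symm _).2⟩
      have := hPc.tendsto 0
      rwa [hP0] at this
    have hyW : y ∈ W := mem_of_mem_nhdsWithin hyS hW
    have hPW : Tendsto P (nhds 0) (nhdsWithin y W) :=
      tendsto_nhdsWithin_iff.2 ⟨hPS.mono_right nhdsWithin_le_nhds, hPS hW⟩
    have hev := ((hφc y hyW).tendsto.comp hPW).eventually hinv
    have hev2 : ∀ᶠ t : ℝ in nhdsWithin 0 (Set.Ioi 0), t < 1/2 :=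
      nhdsWithin_le_nhds (gt_mem_nhds (by norm_num))
    obtain ⟨t, ⟨⟨ht, htW⟩, ht1⟩, ht0⟩ := ((((hev.and (hPS hW)).filter_mono
      (nhdsWithin_le_nhds (s := Set.Ioi (0:ℝ)))).and hev2).and self_mem_nhdsWithin).exists
    obtain ⟨q, hq, hqt⟩ := ht
    have heq : M q = P t := hφi hq.2 htW hqt
    have := congrArg Prod.fst (h.symm.injective (Subtype.ext heq))
    simp only at this
    have h1 := hτle q.1
    rw [this] at h1
    simp only [ℓ] at h1
    have ht0' : 0 < t := ht0
    rw [min_eq_left ht1.le, max_eq_right ht0'.le] at h1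
    push_cast at h1
    linarith

lemma proj_coe {D : Submodule ℝ (Euc N)} {v : Euc N} (h : v ∈ D) :
    ((D.orthogonalProjectionOnto v : D) : Euc N) = v :=
  congrArg Subtype.val (Submodule.orthogonalProjectionOnto_mem_subspace_eq_self (⟨v, h⟩ : D))

lemma interior_biUnion_empty {X ι : Type*} [TopologicalSpace X] {I : Set ι} (hI : I.Finite)
    (Z : ι → Set X) (hc : ∀ i ∈ I, IsClosed (Z i)) (he : ∀ i ∈ I, interior (Z i) = ∅) :
    interior (⋃ i ∈ I, Z i) = ∅ := by
  induction I, hI using Set.Finite.induction_on with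
  | empty => simp
  | @insert a s ha hs ih =>
    rw [Set.biUnion_insert, interior_union_isClosed_of_interior_empty (hc a (by simp))
      (ih (fun i hi => hc i (by simp [hi])) (fun i hi => he i (by simp [hi])))]
    exact he a (by simp)

lemma hull_closed (s : Finset (Euc N)) : IsClosed (convexHull ℝ (s : Set (Euc N))) :=
  (s.finite_toSet.isCompact_convexHull ℝ).isClosed

lemma sub_mem_vectorSpan {s : Set (Euc N)} {a b : Euc N} (ha : a ∈ convexHull ℝ s)
    (hb : b ∈ convexHull ℝ s) : a - b ∈ vectorSpan ℝ s := by
  have := AffineSubspace.vsub_mem_direction (convexHull_subset_affineSpan s ha)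
    (convexHull_subset_affineSpan s hb)
  rwa [direction_affineSpan] at this

/-- An `(n-1)`-dimensional parametrized patch is not contained in the `(n-2)`-skeleton. -/
lemma exists_not_small {n : ℕ} (K : SimplicialComplex ℝ (Euc N))
    (hfin : K.faces.Finite) (g : Euc (n - 1) → Euc N) (hg : Continuous g)
    (hgi : Function.Injective g) {O : Set (Euc (n - 1))} (hO : IsOpen O) (hne : O.Nonempty) :
    ∃ v ∈ O, ∀ s ∈ K.faces, s.card ≤ n - 1 → g v ∉ convexHull ℝ (s : Set (Euc N)) := by
  by_contra hcon
  push Not at hcon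
  have hI : {s ∈ K.faces | s.card ≤ n - 1}.Finite := hfin.subset (fun s hs => hs.1)
  have hsub : O ⊆ ⋃ s ∈ {s ∈ K.faces | s.card ≤ n - 1}, g ⁻¹' (convexHull ℝ (s : Set (Euc N))) := by
    intro v hv
    obtain ⟨s, hs, hc, hm⟩ := hcon v hv
    simp only [Set.mem_iUnion]
    exact ⟨s, ⟨hs, hc⟩, hm⟩
  have hempty := interior_biUnion_empty hI (fun s => g ⁻¹' (convexHull ℝ (s : Set (Euc N))))
    (fun s _ => (hull_closed s).preimage hg) (by
      rintro s ⟨hs, hc⟩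
      by_contra hne
      obtain ⟨x, hx⟩ := Set.nonempty_iff_ne_empty.2 hne
      have hxm := mem_interior_iff_mem_nhds.1 hx
      have hxx : g x ∈ convexHull ℝ (s : Set (Euc N)) := by
        have h := interior_subset hx
        exact h
      have hsne : s.Nonempty := K.nonempty_of_mem_faces hs
      have hpos := hsne.card_pos
      have hfr : Module.finrank ℝ (vectorSpan ℝ (s : Set (Euc N))) < Module.finrank ℝ (Euc (n - 1)) := by
        have h1 : Module.finrank ℝ (vectorSpan ℝ (Set.range ((↑) : s → Euc N))) = s.card - 1 :=
          (K.indep hs).finrank_vectorSpan (by rw [Fintype.card_coe]; omega)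
        rw [Subtype.range_coe_subtype] at h1
        have h2 : {x | x ∈ s} = (s : Set (Euc N)) := rfl
        rw [h2] at h1
        rw [h1, finrank_euclideanSpace_fin]
        omega
      refine no_embedding_of_lt hfr
        (fun v => (vectorSpan ℝ (s : Set (Euc N))).orthogonalProjectionOnto (g v - g x)) hxm
        (by fun_prop) ?_
      intro v hv w hw hvw
      have a1 : g v - g x ∈ vectorSpan ℝ (s : Set (Euc N)) :=
        sub_mem_vectorSpan hv hxx
      have a2 : g w - g x ∈ vectorSpan ℝ (s : Set (Euc N)) :=
        sub_mem_vectorSpan hw hxx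
      have hvw' := congrArg Subtype.val hvw
      simp only at hvw'
      rw [proj_coe a1, proj_coe a2] at hvw'
      exact hgi (sub_left_injective hvw'))
  have := interior_maximal hsub hO
  rw [hempty] at this
  exact hne.ne_empty (Set.subset_empty_iff.1 this)

lemma eventually_mem_hull {s : Finset (Euc N)} {y : Euc N}
    (hy : y ∈ convexHull ℝ (s : Set (Euc N)))
    (hmin : ∀ i ∈ s, y ∉ convexHull ℝ ((s.erase i : Finset (Euc N)) : Set (Euc N))) :
    ∀ᶠ v : vectorSpan ℝ (s : Set (Euc N)) in nhds 0,
      y + (v : Euc N) ∈ convexHull ℝ (s : Set (Euc N)) := by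
  obtain ⟨w, hw0, hw1, hwy⟩ := Finset.mem_convexHull'.1 hy
  have hwpos : ∀ i ∈ s, 0 < w i := by
    intro i hi
    refine lt_of_le_of_ne (hw0 i hi) fun h0 => hmin i hi ?_
    refine Finset.mem_convexHull'.2 ⟨w, fun j hj => hw0 j (Finset.mem_of_mem_erase hj), ?_, ?_⟩
    · rw [← hw1, ← Finset.add_sum_erase s w hi, ← h0, zero_add]
    · rw [← hwy, ← Finset.add_sum_erase s _ hi, ← h0, zero_smul, zero_add]
  let T : (s → ℝ) →ₗ[ℝ] Euc N := Fintype.linearCombination ℝ (fun i : s => (i : Euc N) - y)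
  have hT : ∀ c, T c = ∑ i : s, c i • ((i : Euc N) - y) := fun c => rfl
  have hrange : vectorSpan ℝ (s : Set (Euc N)) ≤ LinearMap.range T := by
    have hi : ∀ i ∈ s, i - y ∈ LinearMap.range T := by
      intro i hi
      refine ⟨Pi.single ⟨i, hi⟩ 1, ?_⟩
      rw [hT, Finset.sum_eq_single ⟨i, hi⟩]
      · simp
      · intro b _ hb; simp [Pi.single_eq_of_ne hb]
      · simp
    unfold vectorSpan
    rw [Submodule.span_le]
    rintro _ ⟨i, hi', j, hj', rfl⟩
    have := Submodule.sub_mem _ (hi i hi') (hi j hj')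
    simpa using this
  obtain ⟨R0, hR0⟩ := LinearMap.exists_rightInverse_of_surjective T.rangeRestrict
    (LinearMap.range_rangeRestrict T)
  let R : vectorSpan ℝ (s : Set (Euc N)) →ₗ[ℝ] (s → ℝ) := R0.comp (Submodule.inclusion hrange)
  have hR : ∀ v : vectorSpan ℝ (s : Set (Euc N)), T (R v) = v := by
    intro v
    have := LinearMap.congr_fun hR0 (Submodule.inclusion hrange v)
    exact congrArg Subtype.val this
  have hRc : Continuous R := R.continuous_of_finiteDimensional
  have hev : ∀ᶠ v : vectorSpan ℝ (s : Set (Euc N)) in nhds 0,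
      ∀ i : s, 0 < w i * (1 - ∑ j, R v j) + R v i := by
    rw [eventually_all]
    intro i
    have hc : Continuous fun v => w i * (1 - ∑ j, R v j) + R v i := by
      have : ∀ j, Continuous fun v => R v j := fun j => (continuous_apply j).comp hRc
      fun_prop
    refine hc.continuousAt.eventually (lt_mem_nhds ?_)
    simpa using hwpos i i.2
  filter_upwards [hev] with v hv
  refine Finset.mem_convexHull'.2 ⟨fun z => if hz : z ∈ s then w z * (1 - ∑ j, R v j) + R v ⟨z, hz⟩ else 0, ?_, ?_, ?_⟩
  · intro z hz
    simp only [dif_pos hz]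
    exact (hv ⟨z, hz⟩).le
  · rw [← Finset.sum_coe_sort]
    simp only [Finset.coe_mem, dif_pos, Finset.sum_add_distrib, ← Finset.sum_mul]
    rw [Finset.sum_coe_sort s w, hw1]; ring
  · rw [← Finset.sum_coe_sort]
    simp only [Finset.coe_mem, dif_pos, add_smul, Finset.sum_add_distrib]
    have e1 : ∑ i : s, (w i * (1 - ∑ j, R v j)) • (i : Euc N) = (1 - ∑ j, R v j) • y := by
      rw [← hwy, Finset.smul_sum, ← Finset.sum_coe_sort s]
      refine Finset.sum_congr rfl fun i _ => ?_
      rw [smul_smul, mul_comm]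
    have e2 : (v : Euc N) = ∑ i : s, R v i • (i : Euc N) - (∑ j, R v j) • y := by
      rw [← hR v, hT]
      simp only [smul_sub, Finset.sum_sub_distrib, Finset.sum_smul, hR]
    rw [e1, e2]
    module

lemma side {s : Finset (Euc N)} {a y : Euc N} (ha : a ∉ s)
    (hind : AffineIndependent ℝ ((↑) : ((insert a s : Finset (Euc N))) → Euc N))
    (hy : y ∈ convexHull ℝ (s : Set (Euc N))) :
    ∃ L : Euc N →ₗ[ℝ] ℝ × vectorSpan ℝ (s : Set (Euc N)),
      (∀ z ∈ convexHull ℝ ((insert a s : Finset (Euc N)) : Set (Euc N)),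
        0 ≤ (L (z - y)).1 ∧ z = y + (L (z - y)).2 + (L (z - y)).1 • (a - y)) ∧
      ∀ (t : ℝ) (v : vectorSpan ℝ (s : Set (Euc N))), L (v + t • (a - y)) = (t, v) := by
  set D := vectorSpan ℝ (s : Set (Euc N)) with hD
  have hay : a - y ∉ D := by
    intro hmem
    have h1 : a ∈ affineSpan ℝ (s : Set (Euc N)) := by
      have hy' : y ∈ affineSpan ℝ (s : Set (Euc N)) := convexHull_subset_affineSpan _ hy
      have : (a - y) +ᵥ y ∈ affineSpan ℝ (s : Set (Euc N)) :=
        AffineSubspace.vadd_mem_of_mem_direction (by rw [direction_affineSpan]; exact hmem) hy'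
      simpa using this
    have h2 := hind.notMem_affineSpan_sdiff ⟨a, Finset.mem_insert_self a s⟩ Set.univ
    apply h2
    have h3 : ((↑) : ((insert a s : Finset (Euc N))) → Euc N) '' (Set.univ \ {⟨a, Finset.mem_insert_self a s⟩}) = (s : Set (Euc N)) := by
      ext z
      constructor
      · rintro ⟨⟨z', hz'⟩, ⟨_, hne⟩, rfl⟩
        rcases Finset.mem_insert.1 hz' with h | h
        · exact absurd (Subtype.ext h) hne
        · exact h
      · intro hz
        refine ⟨⟨z, Finset.mem_insert_of_mem hz⟩, ⟨trivial, fun h => ha ?_⟩, rfl⟩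
        have : z = a := congrArg Subtype.val h
        rw [← this]; exact hz
    rw [h3]; exact h1
  let j : ℝ × D →ₗ[ℝ] Euc N := LinearMap.coprod (LinearMap.toSpanSingleton ℝ (Euc N) (a - y)) D.subtype
  have hj : ∀ t v, j (t, v) = (v : Euc N) + t • (a - y) := by
    intro t v; simp [j, add_comm]
  have hker : LinearMap.ker j = ⊥ := by
    rw [LinearMap.ker_eq_bot']
    rintro ⟨t, v⟩ h0
    rw [hj] at h0
    have ht : t = 0 := by
      by_contra ht
      apply hay
      have : a - y = t⁻¹ • (-(v : Euc N)) := by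
        rw [eq_inv_smul_iff₀ ht]; exact eq_neg_of_add_eq_zero_right h0
      rw [this]
      exact D.smul_mem _ (D.neg_mem v.2)
    subst ht
    simp at h0
    simp [h0]
  obtain ⟨L, hL⟩ := LinearMap.exists_leftInverse_of_injective j hker
  have hL' : ∀ (t : ℝ) (v : D), L (v + t • (a - y)) = (t, v) := by
    intro t v
    rw [← hj]; exact LinearMap.congr_fun hL (t, v)
  refine ⟨L, ?_, hL'⟩
  intro z hz
  have hsne : (s : Set (Euc N)).Nonempty := convexHull_nonempty_iff.1 ⟨y, hy⟩
  rw [Finset.coe_insert, convexHull_insert hsne, convexJoin_singleton_left] at hz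
  simp only [Set.mem_iUnion] at hz
  obtain ⟨q, hq, c, d, hc, hd, hcd, rfl⟩ := hz
  have hqy : q - y ∈ D := sub_mem_vectorSpan hq hy
  have e : c • a + d • q - y = ((d • (⟨q - y, hqy⟩ : D) : D) : Euc N) + c • (a - y) := by
    have : d = 1 - c := by linarith
    subst this
    simp only [Submodule.coe_smul]
    module
  rw [e, hL']
  refine ⟨hc, ?_⟩
  simp only
  rw [add_assoc, ← e]; abel

lemma exists_carrier (K : SimplicialComplex ℝ (Euc N)) {y : Euc N} (hy : y ∈ K.space) :
    ∃ s ∈ K.faces, y ∈ convexHull ℝ (s : Set (Euc N)) ∧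
      ∀ t ∈ K.faces, y ∈ convexHull ℝ (t : Set (Euc N)) → s ⊆ t := by
  obtain ⟨s0, hs0, hys0⟩ := SimplicialComplex.mem_space_iff.1 hy
  have hex : ∃ k : ℕ, ∃ s ∈ K.faces, y ∈ convexHull ℝ (s : Set (Euc N)) ∧ s.card = k :=
    ⟨_, s0, hs0, hys0, rfl⟩
  obtain ⟨s, hs, hys, hsk⟩ := Nat.find_spec hex
  refine ⟨s, hs, hys, fun t ht hyt => ?_⟩
  have h1 := K.inter_subset_convexHull hs ht ⟨hys, hyt⟩
  rw [← Finset.coe_inter] at h1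
  have hne : (s ∩ t).Nonempty := by
    rw [← Finset.coe_nonempty]; exact convexHull_nonempty_iff.1 ⟨y, h1⟩
  have hface : s ∩ t ∈ K.faces := K.down_closed hs Finset.inter_subset_left hne
  have := Nat.find_min' hex ⟨s ∩ t, hface, h1, rfl⟩
  rw [← hsk] at this
  exact Finset.inter_eq_left.1 (Finset.eq_of_subset_of_card_le Finset.inter_subset_left this)

lemma star_mem_nhds (K : SimplicialComplex ℝ (Euc N)) (hfin : K.faces.Finite) {y : Euc N}
    {s : Finset (Euc N)} (h : ∀ t ∈ K.faces, y ∈ convexHull ℝ (t : Set (Euc N)) → s ⊆ t) :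
    (⋃ t ∈ {t ∈ K.faces | s ⊆ t}, convexHull ℝ (t : Set (Euc N))) ∈ nhdsWithin y K.space := by
  have hc : IsClosed (⋃ t ∈ {t ∈ K.faces | ¬ s ⊆ t}, convexHull ℝ (t : Set (Euc N))) :=
    (hfin.subset fun t ht => ht.1).isClosed_biUnion fun t _ => hull_closed t
  have hy : y ∉ (⋃ t ∈ {t ∈ K.faces | ¬ s ⊆ t}, convexHull ℝ (t : Set (Euc N))) := by
    simp only [Set.mem_iUnion, not_exists]
    rintro t ⟨ht, hst⟩ hyt
    exact hst (h t ht hyt)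
  refine Filter.mem_of_superset (Filter.inter_mem (mem_nhdsWithin_of_mem_nhds (hc.isOpen_compl.mem_nhds hy)) self_mem_nhdsWithin) ?_
  rintro z ⟨hz, hzK⟩
  obtain ⟨t, ht, hzt⟩ := SimplicialComplex.mem_space_iff.1 hzK
  simp only [Set.mem_iUnion]
  refine ⟨t, ⟨ht, ?_⟩, hzt⟩
  by_contra hst
  apply hz
  simp only [Set.mem_iUnion]
  exact ⟨t, ⟨ht, hst⟩, hzt⟩

lemma locModel_of_not_small {n : ℕ} (hn : 2 ≤ n)
    (K : SimplicialComplex ℝ (Euc N)) (hfin : K.faces.Finite)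
    (hdim : ∀ s ∈ K.faces, s.card ≤ n + 1)
    (h2 : ∀ η ∈ K.faces, η.card = n → (nSimplicesOn n K η).ncard = 2)
    {y : Euc N} (hy : y ∈ K.space)
    (hys : ∀ s ∈ K.faces, s.card ≤ n - 1 → y ∉ convexHull ℝ (s : Set (Euc N))) :
    LocModel n K.space y := by
  obtain ⟨s, hs, hyS, hsmin⟩ := exists_carrier K hy
  have hstar := star_mem_nhds K hfin hsmin
  have hsne : s.Nonempty := K.nonempty_of_mem_faces hs
  have hin := eventually_mem_hull hyS (by
    intro i hi hyi
    have hne : (s.erase i).Nonempty := by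
      rw [← Finset.coe_nonempty]; exact convexHull_nonempty_iff.1 ⟨y, hyi⟩
    have := hsmin _ (K.down_closed hs (Finset.erase_subset i s) hne) hyi
    exact Finset.notMem_erase i s (this hi))
  set D := vectorSpan ℝ (s : Set (Euc N)) with hD
  have hcard : n ≤ s.card := by
    by_contra hlt
    exact hys s hs (by omega) hyS
  have hfr : Module.finrank ℝ D = s.card - 1 := by
    have h1 : Module.finrank ℝ (vectorSpan ℝ (Set.range ((↑) : s → Euc N))) = s.card - 1 :=
      (K.indep hs).finrank_vectorSpan (by rw [Fintype.card_coe]; omega)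
    rw [Subtype.range_coe_subtype] at h1
    exact h1
  rcases Nat.lt_or_ge n s.card with hgt | hle
  · -- top-dimensional
    have hc1 : s.card = n + 1 := le_antisymm (hdim s hs) hgt
    refine LocModel.of (E := D) (by omega) (fun z => D.orthogonalProjectionOnto (z - y))
      (fun v => y + (v : Euc N)) (convexHull ℝ (s : Set (Euc N)))
      {v | y + (v : Euc N) ∈ convexHull ℝ (s : Set (Euc N))} ?_ (by fun_prop) ?_ hin
      (by fun_prop) ?_ (by simp) (fun v hv => SimplicialComplex.convexHull_subset_space hs hv)
    · refine Filter.mem_of_superset hstar ?_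
      intro z hz
      simp only [Set.mem_iUnion] at hz
      obtain ⟨t, ⟨ht, hst⟩, hzt⟩ := hz
      have : s = t := Finset.eq_of_subset_of_card_le hst (by rw [hc1]; exact hdim t ht)
      rw [this]; exact hzt
    · intro z hz w hw hzw
      have a1 : z - y ∈ D := sub_mem_vectorSpan hz hyS
      have a2 : w - y ∈ D := sub_mem_vectorSpan hw hyS
      have hvw' := congrArg Subtype.val hzw
      simp only at hvw'
      rw [proj_coe a1, proj_coe a2] at hvw'
      exact sub_left_injective hvw'
    · intro v _ w _ hvw
      exact Subtype.ext (add_left_cancel hvw)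
  · -- codimension one
    have hc1 : s.card = n := le_antisymm hle hcard
    obtain ⟨σ₁, σ₂, hne, hσ⟩ := Set.ncard_eq_two.1 (h2 s hs hc1)
    have hσ₁ : σ₁ ∈ nSimplicesOn n K s := by rw [hσ]; simp
    have hσ₂ : σ₂ ∈ nSimplicesOn n K s := by rw [hσ]; simp
    obtain ⟨a, ha, rfl⟩ := Finset.exists_eq_insert_iff.2 ⟨hσ₁.2.2, by rw [hσ₁.2.1, hc1]⟩
    obtain ⟨b, hb, rfl⟩ := Finset.exists_eq_insert_iff.2 ⟨hσ₂.2.2, by rw [hσ₂.2.1, hc1]⟩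
    set A := convexHull ℝ ((insert a s : Finset (Euc N)) : Set (Euc N)) with hA
    set B := convexHull ℝ ((insert b s : Finset (Euc N)) : Set (Euc N)) with hB
    have hab : a ≠ b := by rintro rfl; exact hne rfl
    have hAB : A ∩ B ⊆ convexHull ℝ (s : Set (Euc N)) := by
      refine (K.inter_subset_convexHull hσ₁.1 hσ₂.1).trans (convexHull_mono ?_)
      rintro z ⟨hz1, hz2⟩
      rcases Finset.mem_insert.1 hz1 with h | h
      · rcases Finset.mem_insert.1 hz2 with h' | h'
        · exact absurd (h.symm.trans h') hab
        · exact h'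
      · exact h
    have hsA : convexHull ℝ (s : Set (Euc N)) ⊆ A := convexHull_mono (by simp)
    have hsB : convexHull ℝ (s : Set (Euc N)) ⊆ B := convexHull_mono (by simp)
    obtain ⟨La, hLa1, hLa2⟩ := side ha (K.indep hσ₁.1) hyS
    obtain ⟨Lb, hLb1, hLb2⟩ := side hb (K.indep hσ₂.1) hyS
    have hLac : Continuous La := La.continuous_of_finiteDimensional
    have hLbc : Continuous Lb := Lb.continuous_of_finiteDimensional
    let φ : Euc N → ℝ × D := fun z =>
      if z ∈ A then La (z - y) else (-(Lb (z - y)).1, (Lb (z - y)).2)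
    have hφA : ∀ z ∈ A, φ z = La (z - y) := fun z hz => if_pos hz
    have hφB : ∀ z ∈ B, φ z = (-(Lb (z - y)).1, (Lb (z - y)).2) := by
      intro z hz
      by_cases hzA : z ∈ A
      · rw [hφA z hzA]
        have hzD : z - y ∈ D := sub_mem_vectorSpan (hAB ⟨hzA, hz⟩) hyS
        have e1 := hLa2 0 ⟨z - y, hzD⟩
        have e2 := hLb2 0 ⟨z - y, hzD⟩
        simp only [zero_smul, add_zero] at e1 e2
        rw [e1, e2]; simp
      · exact if_neg hzA
    let ψ : ℝ × D → Euc N := fun q =>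
      y + (q.2 : Euc N) + max q.1 0 • (a - y) + max (-q.1) 0 • (b - y)
    have hψc : Continuous ψ := by fun_prop
    have hhalf : ∀ (c : Euc N) (C : Set (Euc N)), Convex ℝ C → c ∈ C → y ∈ C → ∀ (t : ℝ) (v : Euc N),
        0 ≤ t → t ≤ 1/2 → y + (2 : ℝ) • v ∈ C → y + v + t • (c - y) ∈ C := by
      intro c C hC hc hyC t v ht0 ht1 hv
      have h1 : (1 - 2 * t) • y + (2 * t) • c ∈ C := hC hyC hc (by linarith) (by linarith) (by ring)
      have h3 := hC hv h1 (show (0:ℝ) ≤ 1/2 by norm_num) (show (0:ℝ) ≤ 1/2 by norm_num) (by norm_num)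
      convert h3 using 1
      module
    have hO : {q : ℝ × D | |q.1| < 1/2 ∧ y + (((2 : ℝ) • q.2 : D) : Euc N) ∈ convexHull ℝ (s : Set (Euc N))}
        ∈ nhds (0 : ℝ × D) := by
      refine Filter.inter_mem ?_ ?_
      · refine IsOpen.mem_nhds (isOpen_lt (f := fun q : ℝ × D => |q.1|) (by fun_prop) continuous_const) ?_
        show |(0 : ℝ × D).1| < 1 / 2
        simp
      · have : Tendsto (fun q : ℝ × D => (2 : ℝ) • q.2) (nhds 0) (nhds 0) := by
          have hc : Continuous fun q : ℝ × D => (2 : ℝ) • q.2 := by fun_prop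
          simpa using hc.tendsto 0
        exact this hin
    have hpos : ∀ q : ℝ × D, 0 ≤ q.1 → ψ q = y + (q.2 : Euc N) + q.1 • (a - y) := by
      intro q hq
      simp only [ψ]
      rw [max_eq_left hq, max_eq_right (by linarith), zero_smul, add_zero]
    have hneg : ∀ q : ℝ × D, q.1 ≤ 0 → ψ q = y + (q.2 : Euc N) + (-q.1) • (b - y) := by
      intro q hq
      simp only [ψ]
      rw [max_eq_right hq, max_eq_left (by linarith), zero_smul, add_zero]
    have haA : a ∈ A := subset_convexHull _ _ (by simp)
    have hbB : b ∈ B := subset_convexHull _ _ (by simp)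
    have hψA : ∀ q : ℝ × D, |q.1| < 1/2 → y + (((2 : ℝ) • q.2 : D) : Euc N) ∈ convexHull ℝ (s : Set (Euc N)) →
        0 ≤ q.1 → ψ q ∈ A := by
      intro q h1 h3 h0
      rw [hpos q h0]
      exact hhalf a A (convex_convexHull ℝ _) haA (hsA hyS) _ _ h0 (abs_lt.1 h1).2.le (hsA h3)
    have hψB : ∀ q : ℝ × D, |q.1| < 1/2 → y + (((2 : ℝ) • q.2 : D) : Euc N) ∈ convexHull ℝ (s : Set (Euc N)) →
        q.1 ≤ 0 → ψ q ∈ B := by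
      intro q h1 h3 h0
      rw [hneg q h0]
      exact hhalf b B (convex_convexHull ℝ _) hbB (hsB hyS) _ _ (by linarith)
        (by linarith [(abs_lt.1 h1).1]) (hsB h3)
    refine LocModel.of (E := ℝ × D) (by rw [Module.finrank_prod, hfr, Module.finrank_self]; omega)
      φ ψ (A ∪ B) _ ?_ ?_ ?_ hO hψc.continuousOn ?_ (by simp [ψ]) ?_
    · refine Filter.mem_of_superset hstar ?_
      intro z hz
      simp only [Set.mem_iUnion] at hz
      obtain ⟨t, ⟨ht, hst⟩, hzt⟩ := hz
      have htc := Finset.card_le_card hst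
      have htd := hdim t ht
      rcases Nat.lt_or_ge n t.card with hlt | hge
      · have : t ∈ nSimplicesOn n K s := ⟨ht, by omega, hst⟩
        rw [hσ] at this
        rcases this with rfl | h
        · exact Or.inl hzt
        · have h' : t = insert b s := h
          subst h'
          exact Or.inr hzt
      · have : s = t := Finset.eq_of_subset_of_card_le hst (by omega)
        subst this
        exact Or.inl (hsA hzt)
    · refine ContinuousOn.union_of_isClosed ?_ ?_ (hull_closed _) (hull_closed _)
      · refine ContinuousOn.congr (f := fun z => La (z - y)) ?_ hφA
        fun_prop
      · refine ContinuousOn.congr (f := fun z => (-(Lb (z - y)).1, (Lb (z - y)).2)) ?_ hφB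
        fun_prop
    · have hmix : ∀ z ∈ A, ∀ w ∈ B, φ z = φ w → z = w := by
        intro z hz w hw hzw
        rw [hφA z hz, hφB w hw] at hzw
        have e1 := congrArg Prod.fst hzw
        have e2 := congrArg Prod.snd hzw
        simp only at e1 e2
        obtain ⟨p1, p2⟩ := hLa1 z hz
        obtain ⟨q1, q2⟩ := hLb1 w hw
        have z1 : (La (z - y)).1 = 0 := by linarith
        have z2 : (Lb (w - y)).1 = 0 := by linarith
        rw [p2, q2, z1, z2, e2]; simp
      rintro z (hz | hz) w (hw | hw) hzw
      · rw [hφA z hz, hφA w hw] at hzw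
        rw [(hLa1 z hz).2, (hLa1 w hw).2, hzw]
      · exact hmix z hz w hw hzw
      · exact (hmix w hw z hz hzw.symm).symm
      · rw [hφB z hz, hφB w hw] at hzw
        have e1 := neg_injective (congrArg Prod.fst hzw)
        have e2 := congrArg Prod.snd hzw
        simp only at e1 e2
        rw [(hLb1 z hz).2, (hLb1 w hw).2, e1, e2]
    · have hleft : ∀ q : ℝ × D, |q.1| < 1/2 → y + (((2 : ℝ) • q.2 : D) : Euc N) ∈ convexHull ℝ (s : Set (Euc N)) →
          φ (ψ q) = q := by
        intro q h1 h3
        rcases le_total 0 q.1 with h0 | h0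
        · rw [hφA _ (hψA q h1 h3 h0), hpos q h0]
          have : y + (q.2 : Euc N) + q.1 • (a - y) - y = (q.2 : Euc N) + q.1 • (a - y) := by abel
          rw [this, hLa2]
        · rw [hφB _ (hψB q h1 h3 h0), hneg q h0]
          have : y + (q.2 : Euc N) + (-q.1) • (b - y) - y = (q.2 : Euc N) + (-q.1) • (b - y) := by abel
          rw [this, hLb2]; simp
      intro q hq q' hq' hqq
      rw [← hleft q hq.1 hq.2, ← hleft q' hq'.1 hq'.2, hqq]
    · intro q hq
      rcases le_total 0 q.1 with h0 | h0
      · exact SimplicialComplex.convexHull_subset_space hσ₁.1 (hψA q hq.1 hq.2 h0)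
      · exact SimplicialComplex.convexHull_subset_space hσ₂.1 (hψB q hq.1 hq.2 h0)

lemma no_csetAux {n : ℕ} (hn : 2 ≤ n) (K : SimplicialComplex ℝ (Euc N)) (hfin : K.faces.Finite)
    (hdim : ∀ s ∈ K.faces, s.card ≤ n + 1)
    (h2 : ∀ η ∈ K.faces, η.card = n → (nSimplicesOn n K η).ncard = 2)
    {r : ℕ} (hr : r ≠ 2) (x : Euc N) : x ∉ csetAux n K r := by
  rintro ⟨hxK, U, hU, hUS, h, hx0⟩
  have hxU : x ∈ U := mem_of_mem_nhdsWithin hxK hU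
  obtain ⟨V, hVo, hxV, hVU⟩ := mem_nhdsWithin.1 hU
  let g : Euc (n - 1) → Euc N := fun v => (h.symm (⟨0, zero_mem_tcone r⟩, v) : U)
  have hg : Continuous g := by
    refine continuous_subtype_val.comp (h.symm.continuous.comp ?_)
    fun_prop
  have hgi : Function.Injective g := by
    intro v w hvw
    have := h.symm.injective (Subtype.ext hvw)
    exact (Prod.ext_iff.1 this).2
  have hgx : g (h ⟨x, hxU⟩).2 = x := by
    have : ((⟨0, zero_mem_tcone r⟩ : Tcone r), (h ⟨x, hxU⟩).2) = h ⟨x, hxU⟩ :=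
      Prod.ext (Subtype.ext (hx0 hxU).symm) rfl
    show ((h.symm (_, _) : U) : Euc N) = x
    rw [this, h.symm_apply_apply]
  obtain ⟨v, hv, hvs⟩ := exists_not_small K hfin g hg hgi (hVo.preimage hg)
    ⟨(h ⟨x, hxU⟩).2, by rw [Set.mem_preimage, hgx]; exact hxV⟩
  have hyU : g v ∈ U := (h.symm (⟨0, zero_mem_tcone r⟩, v)).2
  have hUy : U ∈ nhdsWithin (g v) K.space := mem_nhdsWithin.2 ⟨V, hVo, hv, hVU⟩
  refine no_cone (by omega) hr (locModel_of_not_small hn K hfin hdim h2 (hUS hyU) hvs) hUy hUS hyU h ?_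
  have : h ⟨g v, hyU⟩ = (⟨0, zero_mem_tcone r⟩, v) := h.apply_symm_apply _
  rw [this]

lemma strRank_eq_one {n : ℕ} (hn : 2 ≤ n) (K : SimplicialComplex ℝ (Euc N)) (hfin : K.faces.Finite)
    (hdim : ∀ s ∈ K.faces, s.card ≤ n + 1)
    (h2 : ∀ η ∈ K.faces, η.card = n → (nSimplicesOn n K η).ncard = 2)
    {η : Finset (Euc N)} (hη : η ∈ K.faces) : strRank n K η = 1 := by
  unfold strRank
  refine dif_neg ?_
  rintro ⟨r, hr, hsub⟩
  have hne : (openSimplex η).Nonempty := by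
    refine Set.Nonempty.intrinsicInterior (convex_convexHull ℝ _) ?_
    exact (Finset.coe_nonempty.2 (K.nonempty_of_mem_faces hη)).convexHull
  obtain ⟨x, hx⟩ := hne
  exact no_csetAux hn K hfin hdim h2 hr x (hsub hx)

lemma eulerChar_eq (K : SimplicialComplex ℝ (Euc N)) (hfin : K.faces.Finite) :
    eulerChar K.faces = ∑ η ∈ hfin.toFinset, (-1 : ℤ) ^ (η.card - 1) := by
  have hf : ∀ k, fcount K.faces k = (hfin.toFinset.filter fun η => η.card - 1 = k).card := by
    intro k
    unfold fcount
    rw [← Set.ncard_coe_finset]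
    congr 1
    ext η
    simp only [Set.mem_setOf_eq, Finset.coe_filter, Set.Finite.mem_toFinset]
    refine and_congr_right fun hη => ?_
    have := (K.nonempty_of_mem_faces hη).card_pos
    omega
  unfold eulerChar
  rw [finsum_eq_sum_of_support_subset (s := hfin.toFinset.image fun η => η.card - 1)]
  · rw [← Finset.sum_fiberwise_of_maps_to (s := hfin.toFinset)
      (t := hfin.toFinset.image fun η => η.card - 1) (g := fun η => η.card - 1)
      (fun η hη => Finset.mem_image_of_mem _ hη)]
    refine Finset.sum_congr rfl fun k _ => ?_
    rw [hf, Finset.sum_congr rfl (g := fun _ => (-1 : ℤ) ^ k)]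
    · rw [Finset.sum_const, nsmul_eq_mul, mul_comm]
    · intro η hη
      rw [(Finset.mem_filter.1 hη).2]
  · intro k hk
    have hk' : fcount K.faces k ≠ 0 := by
      intro h0
      apply hk
      simp [h0]
    rw [hf] at hk'
    obtain ⟨η, hη⟩ := Finset.card_pos.1 (Nat.pos_of_ne_zero hk')
    rw [Finset.mem_filter] at hη
    exact Finset.mem_coe.2 (Finset.mem_image.2 ⟨η, hη.1, hη.2⟩)

/-- If `K` is a finite `n`-dimensional simplicial complex (`n ≥ 2`) in which
every `(n-1)`-simplex is a face of precisely two `n`-simplices, then the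
stratified Euler characteristic equals the combinatorial Euler characteristic:
`χˢ(K) = χ(K)`. -/
theorem stratEuler_eq_eulerChar {N n : ℕ} (hn : 2 ≤ n)
    (K : SimplicialComplex ℝ (Euc N)) (hfin : K.faces.Finite) (hdim : IsNDim n K)
    (h2 : ∀ η ∈ K.faces, η.card = n → (nSimplicesOn n K η).ncard = 2) :
    stratEuler n K = (eulerChar K.faces : ℝ) := by
  unfold stratEuler
  rw [eulerChar_eq K hfin, finsum_mem_eq_finite_toFinset_sum _ hfin]
  push_cast
  refine Finset.sum_congr rfl fun η hη => ?_
  rw [strRank_eq_one hn K hfin hdim.1 h2 (hfin.mem_toFinset.1 hη), one_mul]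

end AngleDefectPaper
end
end
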